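/- arXiv:2110.02147 — 2 statements merged into one kernel-verified Lean document; each statement's English description precedes it below -/
import Mathlib

section
/- Assume the alphabet 𝒲₁ is finite (so Σ is a compact two-sided subshift of finite type) and T_𝔰 is topologically transitive. Let f∈𝓗₊, and let c be slowly increasing and such that F(φ*)[t] := lim_N ⟨φ_{c;≤N}[t]∗_ρ f, φ*_{c;≤N}[t]∗_ρ f⟩ satisfies F(φ*)[t]→∞ as t↓γ(f) and (lim_N ⟨φ_{c;≤N}[t]∗_ρ f, f⟩)/F(φ*)[t] → 0 as t↓γ(f). For t>γ(f) let μ_c[t] be the weak* limit as N→∞ of the measures μ_{c;N}[t] on Σ defined below. Then any weak* accumulation point μ of (μ_c[t_k])_k along a sequence t_k↓γ(f) is σ-invariant. -/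
open scoped ENNReal NNReal BigOperators
open Filter MeasureTheory

namespace CMS

variable {W : Type*} {G : Type*}

/-- One-sided countable Markov shift determined by the transition matrix `τ`. -/
def SigmaPlus (τ : W → W → Prop) : Set (ℕ → W) :=
  {x | ∀ i, τ (x i) (x (i + 1))}

/-- Two-sided shift space determined by the transition matrix `τ`. -/
def SigmaZ (τ : W → W → Prop) : Set (ℤ → W) :=
  {x | ∀ i, τ (x i) (x (i + 1))}

/-- The left shift on one-sided sequences. -/
def shift (x : ℕ → W) : ℕ → W := fun i => x (i + 1)

/-- The left shift on two-sided sequences. -/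
def shiftZ (x : ℤ → W) : ℤ → W := fun i => x (i + 1)

/-- `weight R n x = R(x) R(σ x) ⋯ R(σ^{n-1} x)`, the multiplicative Birkhoff weight `R_n`. -/
noncomputable def weight (R : (ℕ → W) → ℝ) (n : ℕ) (x : ℕ → W) : ℝ :=
  ∏ i ∈ Finset.range n, R (shift^[i] x)

/-- A finite word occurs somewhere inside a point of `Σ⁺`: admissibility. -/
def Occurs (τ : W → W → Prop) (w : List W) : Prop :=
  ∃ x ∈ SigmaPlus τ, ∃ k : ℕ, ∀ i : Fin w.length, x (k + i) = w.get i

/-- `𝒲_n^{B,b}` : admissible words of length `n`, first letter `B`, last letter `b`. -/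
def WordSet (τ : W → W → Prop) (n : ℕ) (B b : W) : Set (List W) :=
  {w | w.length = n ∧ Occurs τ w ∧ w.head? = some B ∧ w.getLast? = some b}

/-- Same, with admissibility given by consecutive allowed transitions
(as used for subshifts of finite type). -/
def WordSetC (τ : W → W → Prop) (n : ℕ) (B b : W) : Set (List W) :=
  {w | w.length = n ∧ w.Chain' τ ∧ w.head? = some B ∧ w.getLast? = some b}

/-- Concatenation `w x` of a finite word with a one-sided point. -/
def cat (w : List W) (x : ℕ → W) : ℕ → W := fun i =>
  if h : i < w.length then w.get ⟨i, h⟩ else x (i - w.length)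

/-- `𝔰̲(w) = 𝔰(w₁)⋯𝔰(w_n)`. -/
def wprod [Monoid G] (s : W → G) (w : List W) : G := (w.map s).prod

/-- Topological mixing of a countable Markov shift, stated combinatorially. -/
def Mixing (τ : W → W → Prop) : Prop :=
  ∀ B b : W, ∃ N : ℕ, ∀ n, N ≤ n → (WordSet τ n B b).Nonempty

/-- `log R` is locally Hölder with constants `C₀`, `θ`. -/
def LocallyHolder (τ : W → W → Prop) (R : (ℕ → W) → ℝ) (C₀ θ : ℝ) : Prop :=
  0 < C₀ ∧ 0 < θ ∧ θ < 1 ∧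
    ∀ x ∈ SigmaPlus τ, ∀ y ∈ SigmaPlus τ, ∀ n : ℕ, 2 ≤ n →
      (∀ i < n, x i = y i) → |Real.log (R x) - Real.log (R y)| ≤ C₀ * θ ^ n

/-- `Σ_{x∈[B], σⁿx=x} R_n(x)`. -/
noncomputable def Zper (τ : W → W → Prop) (R : (ℕ → W) → ℝ) (B : W) (n : ℕ) : ℝ≥0∞ :=
  ∑' p : {x : ℕ → W // x ∈ SigmaPlus τ ∧ shift^[n] x = x ∧ x 0 = B},
    ENNReal.ofReal (weight R n p.1)

/-- First-return version: `Σ {R_n(x) : x∈[B], σⁿx=x, x_i ≠ B for 0<i<n}`. -/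
noncomputable def ZperFR (τ : W → W → Prop) (R : (ℕ → W) → ℝ) (B : W) (n : ℕ) : ℝ≥0∞ :=
  ∑' p : {x : ℕ → W // x ∈ SigmaPlus τ ∧ shift^[n] x = x ∧ x 0 = B ∧
      ∀ i, 0 < i → i < n → x i ≠ B},
    ENNReal.ofReal (weight R n p.1)

/-- Periodic sums for the group extension, restricted to orbits whose
group displacement `𝔰̲(x₀⋯x_{n-1})` lies in `C`. -/
noncomputable def ZperExt [Monoid G] (τ : W → W → Prop) (R : (ℕ → W) → ℝ)
    (s : W → G) (C : Set G) (B : W) (n : ℕ) : ℝ≥0∞ :=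
  ∑' p : {x : ℕ → W // x ∈ SigmaPlus τ ∧ shift^[n] x = x ∧ x 0 = B ∧
      (List.ofFn fun i : Fin n => s (x i)).prod ∈ C},
    ENNReal.ofReal (weight R n p.1)

/-- Exponential growth rate `limsup Z_n^{1/n}`; equals `exp` of the Gurevič pressure. -/
noncomputable def growthRate (Z : ℕ → ℝ≥0∞) : ℝ≥0∞ :=
  Filter.limsup (fun n => Z n ^ (1 / (n : ℝ))) Filter.atTop

/-- positive recurrence of `R` in the sense of Sarig. -/
def PositiveRecurrent (τ : W → W → Prop) (R : (ℕ → W) → ℝ) : Prop :=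
  ∀ B : W, ∃ M : ℝ, 1 ≤ M ∧ ∀ n : ℕ, 1 ≤ n →
    (ENNReal.ofReal M)⁻¹ ≤ Zper τ R B n ∧ Zper τ R B n ≤ ENNReal.ofReal M

/-- Topological transitivity of the group extension `T_𝔰`, stated combinatorially. -/
def ExtTransitive [Group G] (τ : W → W → Prop) (s : W → G) : Prop :=
  ∀ B b : W, ∀ g : G, ∃ n : ℕ, ∃ w ∈ WordSet τ n B b, wprod s w = g

/-- Topological transitivity of the quotient extension `T_{𝔰_H}`. -/
def ExtTransitiveQ [Group G] (τ : W → W → Prop) (s : W → G) (H : Subgroup G) : Prop :=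
  ∀ B b : W, ∀ q : G ⧸ H, ∃ n : ℕ, ∃ w ∈ WordSet τ n B b,
    (QuotientGroup.mk (wprod s w) : G ⧸ H) = q

/-- The permutation of the canonical basis (indexed by the cosets in a countable
direct sum of quotients `G⧸H_j`) induced by a group element. -/
def rhoIdx [Group G] {J : Type*} (Hfam : J → Subgroup G) (g : G)
    (i : Σ j, G ⧸ Hfam j) : Σ j, G ⧸ Hfam j :=
  ⟨i.1, g • i.2⟩

/-- The convolution `φ ∗_ρ f = Σ_h φ(h) ρ(h) f`, in coordinates, where the
representation `ρ` permutes the basis indexed by `I` via `act`. -/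
noncomputable def convE {I : Type*} [Group G] (act : G → I → I)
    (φ : G → ℝ≥0∞) (f : I → ℝ≥0∞) : I → ℝ≥0∞ :=
  fun i => ∑' h : G, φ h * f (act h⁻¹ i)

/-- inner product of two nonnegative-cone vectors, in coordinates. -/
noncomputable def innerE {I : Type*} (u v : I → ℝ≥0∞) : ℝ≥0∞ := ∑' i, u i * v i

noncomputable def normSqE {I : Type*} (u : I → ℝ≥0∞) : ℝ≥0∞ := innerE u u

/-- membership in the Hilbert space (finite ℓ² norm): together with
nonnegativity of coordinates this is membership in the cone `𝓗₊`. -/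
def MemL2 {I : Type*} (f : I → ℝ≥0∞) : Prop := normSqE f < ⊤

/-- `φ*(g) = φ(g⁻¹)`. -/
def phiStar [Group G] (φ : G → ℝ≥0∞) : G → ℝ≥0∞ := fun g => φ g⁻¹

/-- The partial thermodynamic `G`-density
`φ^{B,a}_{c;≤N}[t](g) = Σ_{n=1}^N t^{-n} c_n Σ{R_n(wx) : w ∈ 𝒲_n^{B,a}, 𝔰̲(w)=g}`. -/
noncomputable def phiLe [Group G] (τ : W → W → Prop) (R : (ℕ → W) → ℝ) (s : W → G)
    (B a : W) (x : ℕ → W) (c : ℕ → ℝ) (t : ℝ) (N : ℕ) (g : G) : ℝ≥0∞ :=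
  ∑ n ∈ Finset.Icc 1 N, (ENNReal.ofReal t)⁻¹ ^ n * ENNReal.ofReal (c n) *
    ∑' w : {w : List W // w ∈ WordSet τ n B a ∧ wprod s w = g},
      ENNReal.ofReal (weight R n (cat w.1 x))

/-- Same with chain-admissibility (for subshifts of finite type). -/
noncomputable def phiLeC [Group G] (τ : W → W → Prop) (R : (ℕ → W) → ℝ) (s : W → G)
    (B a : W) (x : ℕ → W) (c : ℕ → ℝ) (t : ℝ) (N : ℕ) (g : G) : ℝ≥0∞ :=
  ∑ n ∈ Finset.Icc 1 N, (ENNReal.ofReal t)⁻¹ ^ n * ENNReal.ofReal (c n) *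
    ∑' w : {w : List W // w ∈ WordSetC τ n B a ∧ wprod s w = g},
      ENNReal.ofReal (weight R n (cat w.1 x))

/-- `γ(φ ∗_ρ f)`, the decay exponent for `f`. -/
noncomputable def gammaNorm {I : Type*} [Group G] (act : G → I → I)
    (τ : W → W → Prop) (R : (ℕ → W) → ℝ) (s : W → G) (A a : W) (x : ℕ → W)
    (f : I → ℝ≥0∞) : ℝ :=
  sInf {t : ℝ | 0 < t ∧
    (⨆ N, normSqE (convE act (phiLe τ R s A a x (fun _ => 1) t N) f)) < ⊤}

/-- `γ(f)`, defined through `⟨φ_{≤N}[t] ∗_ρ f, f⟩`. -/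
noncomputable def gammaInner {I : Type*} [Group G] (act : G → I → I)
    (τ : W → W → Prop) (R : (ℕ → W) → ℝ) (s : W → G) (A a : W) (x : ℕ → W)
    (f : I → ℝ≥0∞) : ℝ :=
  sInf {t : ℝ | 0 < t ∧
    (⨆ N, innerE (convE act (phiLe τ R s A a x (fun _ => 1) t N) f) f) < ⊤}

/-- `γ(φ* ∗_ρ f)`, defined through `⟨φ_{≤N}[t] ∗_ρ f, φ*_{≤N}[t] ∗_ρ f⟩`. -/
noncomputable def gammaPairStar {I : Type*} [Group G] (act : G → I → I)
    (τ : W → W → Prop) (R : (ℕ → W) → ℝ) (s : W → G) (A a : W) (x : ℕ → W)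
    (f : I → ℝ≥0∞) : ℝ :=
  sInf {t : ℝ | 0 < t ∧
    (⨆ N, innerE (convE act (phiLe τ R s A a x (fun _ => 1) t N) f)
      (convE act (phiStar (phiLe τ R s A a x (fun _ => 1) t N)) f)) < ⊤}

/-- Left translation action on `G` (for the left regular representation). -/
def leftMul (G : Type*) [Group G] : G → G → G := fun g x => g * x

/-- `δ_e`, the indicator of the identity. -/
noncomputable def deltaE (G : Type*) [Group G] : G → ℝ≥0∞ :=
  Set.indicator {(1 : G)} fun _ => (1 : ℝ≥0∞)

/-- The representation determined by the index action `act` has almost invariant vectors,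
i.e. weakly contains the trivial representation. -/
def HasAlmostInvariantVectors {I : Type*} [Group G] (act : G → I → I) : Prop :=
  ∀ F : Finset G, ∀ ε : ℝ, 0 < ε → ∃ v : I → ℝ,
    Summable (fun i => v i ^ 2) ∧ (∑' i, v i ^ 2) = 1 ∧
      ∀ g ∈ F, (∑' i, (v (act g⁻¹ i) - v i) ^ 2) ≤ ε ^ 2

/-- Amenability of a countable discrete group, via almost invariant vectors of
the left regular representation. -/
def Amenable (G : Type*) [Group G] : Prop :=
  HasAlmostInvariantVectors (leftMul G)

/-- Slowly increasing function. -/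
def SlowlyIncreasing (c : ℕ → ℝ) : Prop :=
  (∀ n, 0 < c n) ∧ Monotone c ∧ Tendsto c atTop atTop ∧
    ∀ k : ℕ, Tendsto (fun n => c (n + k) / c n) atTop (nhds 1)

/-- Cylinder set `[w]` in `Σ⁺`. -/
def cylP (τ : W → W → Prop) (w : List W) : Set {x : ℕ → W // x ∈ SigmaPlus τ} :=
  {x | ∀ i : Fin w.length, x.1 i = w.get i}

/-- `w ∧ x`: the number of initial coordinates in which a word agrees
with a one-sided point. -/
noncomputable def agreeLen (w : List W) (x : ℕ → W) : ℕ :=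
  sSup {k | w.take k = (List.range k).map x}

/-- The shift on the one-sided shift space. -/
def shiftPS (τ : W → W → Prop) (x : {y : ℕ → W // y ∈ SigmaPlus τ}) :
    {y : ℕ → W // y ∈ SigmaPlus τ} :=
  ⟨shift x.1, fun i => x.2 (i + 1)⟩

/-- The shift on the two-sided shift space. -/
def shiftZS (τ : W → W → Prop) (x : {y : ℤ → W // y ∈ SigmaZ τ}) :
    {y : ℤ → W // y ∈ SigmaZ τ} :=
  ⟨shiftZ x.1, fun i => x.2 (i + 1)⟩

/-- Negative-coordinate cylinder `[w.]` in the two-sided shift. -/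
def negCyl (τ : W → W → Prop) (w : List W) : Set {x : ℤ → W // x ∈ SigmaZ τ} :=
  {x | ∀ i : Fin w.length, x.1 (-(w.length : ℤ) + (i : ℕ)) = w.get i}


/-- chain-admissibility version of `γ(f)`. -/
noncomputable def gammaInnerC' {W G : Type*} {I : Type*} [Group G] (act : G → I → I)
    (τ : W → W → Prop) (R : (ℕ → W) → ℝ) (s : W → G) (A a : W) (x : ℕ → W)
    (f : I → ℝ≥0∞) : ℝ :=
  sInf {t : ℝ | 0 < t ∧
    (⨆ N, innerE (convE act (phiLeC τ R s A a x (fun _ => 1) t N) f) f) < ⊤}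

/-- The normalising factor `F(φ*)[t] = lim_N ⟨φ_{c;≤N}[t]∗_ρ f, φ*_{c;≤N}[t]∗_ρ f⟩`
(the limit is the supremum, the pairing being monotone in `N`). -/
noncomputable def FstarVal {W G : Type*} {I : Type*} [Group G] (act : G → I → I)
    (τ : W → W → Prop) (R : (ℕ → W) → ℝ) (s : W → G) (A a : W) (x : ℕ → W)
    (f : I → ℝ≥0∞) (c : ℕ → ℝ) (t : ℝ) : ℝ≥0∞ :=
  ⨆ N, innerE (convE act (phiLeC τ R s A a x c t N) f)
    (convE act (phiStar (phiLeC τ R s A a x c t N)) f)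

/-- The two-sided point `Xu.vx`: negative coordinates `⋯X u`, nonnegative `v x`. -/
def tsPoint {W : Type*} (X : ℤ → W) (x : ℕ → W) (u v : List W) : ℤ → W := fun i =>
  if 0 ≤ i then cat v x i.toNat
  else if h : (-i).toNat ≤ u.length ∧ 1 ≤ (-i).toNat ∧ 1 ≤ u.length then
    u.get ⟨u.length - (-i).toNat, by omega⟩
  else X (i + u.length)

/-- The approximating measure `μ_{c;N}[t]`: the weighted sum of Dirac masses at the
points `Xu.vx`, over `u ∈ 𝒲_m^{A,B}`, `v ∈ 𝒲_n^{b,a}` with `τ(B,b)=1` and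
`1 ≤ n,m ≤ N`, with weights
`t^{-n-m} c_n c_m R_n(vx) R_m(uvx) ⟨ρ(𝔰̲(u)𝔰̲(v))f,f⟩ / F(φ*)[t]`. -/
noncomputable def muCN {W G : Type*} {I : Type*} [Group G] [MeasurableSpace W]
    (act : G → I → I) (τ : W → W → Prop) (R : (ℕ → W) → ℝ) (s : W → G)
    (A a : W) (x : ℕ → W) (X : ℤ → W) (f : I → ℝ≥0∞) (c : ℕ → ℝ) (t : ℝ) (N : ℕ) :
    Measure (ℤ → W) :=
  Measure.sum (fun q : ℕ × ℕ × List W × List W =>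
    (Set.indicator
      {q' : ℕ × ℕ × List W × List W |
        1 ≤ q'.1 ∧ q'.1 ≤ N ∧ 1 ≤ q'.2.1 ∧ q'.2.1 ≤ N ∧
          ∃ B b : W, τ B b ∧ q'.2.2.2 ∈ WordSetC τ q'.2.1 A B ∧
            q'.2.2.1 ∈ WordSetC τ q'.1 b a}
      (fun q' =>
        (ENNReal.ofReal t)⁻¹ ^ (q'.1 + q'.2.1) *
          ENNReal.ofReal (c q'.1 * c q'.2.1) *
          ENNReal.ofReal (weight R q'.1 (cat q'.2.2.1 x) *
            weight R q'.2.1 (cat q'.2.2.2 (cat q'.2.2.1 x))) *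
          innerE (fun i => f (act (wprod s q'.2.2.2 * wprod s q'.2.2.1)⁻¹ i)) f /
          FstarVal act τ R s A a x f c t) q) •
      Measure.dirac (tsPoint X x q.2.2.2 q.2.2.1))

/-!
Drop the normalising factor and let `N → ∞`: the approximating measures become
`∑_w t^{-|w|} R_{|w|}(wx) ⟨ρ(𝔰̲(w))f, f⟩ ∑_{0<m<|w|} c_m c_{|w|-m} δ_{σᵐ(X.wx)}`,
because by the cocycle property of `R_n` a pair `(u, v)` matters only through the word `w = uv` and
the place `m` where it is cut. The shift replaces `m` by `m + 1`. As `c` increases slowly, for every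
`b > 1` there is a `K` such that neighbouring coefficients `c_m c_{|w|-m}` agree up to the factor
`b`, apart from at most `K` boundary terms of size at most `c_K c_{|w|}`. Summed over `w`, these
boundary terms amount to `K c_K ⟨φ_c ∗_ρ f, f⟩ = o(F(φ*)[t])`, so they disappear after normalising
as `t ↓ γ(f)`; then `b → 1`.

Bounded distortion keeps the total mass of `μ_c[t]` away from `0`. This is needed since the Bochner
integral with respect to an infinite measure is a junk value: it forces the accumulation point to be
finite. A finite Borel measure on `ℤ → W` is determined by its values on clopen sets, where weak*
limits can be evaluated.
-/

section Words

lemma cat_nil (y : ℕ → W) : cat [] y = y := by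
  funext i
  simp [cat]

lemma cat_cons_zero (b : W) (w : List W) (y : ℕ → W) : cat (b :: w) y 0 = b := by
  simp [cat]

lemma cat_cons_succ (b : W) (w : List W) (y : ℕ → W) (i : ℕ) :
    cat (b :: w) y (i + 1) = cat w y i := by
  simp [cat]

lemma shift_cat_cons (b : W) (w : List W) (y : ℕ → W) :
    shift (cat (b :: w) y) = cat w y :=
  funext (cat_cons_succ b w y)

lemma cat_of_lt_length {w : List W} {i : ℕ} (h : i < w.length) (y : ℕ → W) :
    cat w y i = w[i] := by
  simp [cat, h]

lemma cat_length_add (w : List W) (y : ℕ → W) (i : ℕ) : cat w y (w.length + i) = y i := by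
  simp [cat]

lemma cat_append (u v : List W) (y : ℕ → W) : cat (u ++ v) y = cat u (cat v y) := by
  induction u with
  | nil => simp only [List.nil_append, cat_nil]
  | cons b u ih =>
    funext i
    cases i with
    | zero => simp only [List.cons_append, cat_cons_zero]
    | succ i => simp only [List.cons_append, cat_cons_succ, ih]

lemma cat_eq_of_le_length (w : List W) {y z : ℕ → W} (h : y 0 = z 0) {i : ℕ}
    (hi : i ≤ w.length) : cat w y i = cat w z i := by
  rcases hi.lt_or_eq with hlt | rfl
  · rw [cat_of_lt_length hlt, cat_of_lt_length hlt]
  · simpa [h] using (cat_length_add w y 0).trans (h.trans (cat_length_add w z 0).symm)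

/-- The admissible words of arbitrary length with first letter `B` and last letter `b`. -/
def wordsFromTo (τ : W → W → Prop) (B b : W) : Set (List W) :=
  {w | w ∈ WordSetC τ w.length B b}

variable {τ : W → W → Prop}

lemma mem_wordsFromTo {B b : W} {w : List W} :
    w ∈ wordsFromTo τ B b ↔ w.IsChain τ ∧ w.head? = some B ∧ w.getLast? = some b :=
  ⟨fun h => h.2, fun h => ⟨rfl, h⟩⟩

lemma nil_notMem_wordsFromTo (B b : W) : [] ∉ wordsFromTo τ B b := by
  simp [mem_wordsFromTo]

lemma append_mem_wordsFromTo_iff {A a : W} {u v : List W} (hu : u ≠ []) (hv : v ≠ []) :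
    u ++ v ∈ wordsFromTo τ A a ↔
      ∃ B b, τ B b ∧ u ∈ wordsFromTo τ A B ∧ v ∈ wordsFromTo τ b a := by
  simp only [mem_wordsFromTo, List.isChain_append,
    List.head?_append_of_ne_nil _ hu, List.getLast?_append_of_ne_nil _ hv,
    List.getLast?_eq_some_getLast hu, List.head?_eq_some_head hv, Option.mem_some_iff,
    Option.some_inj]
  grind

lemma cat_mem_sigmaPlus {y : ℕ → W} (hy : y ∈ SigmaPlus τ) {w : List W} (hw : w.IsChain τ)
    (hlast : ∀ b ∈ w.getLast?, τ b (y 0)) : cat w y ∈ SigmaPlus τ := by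
  intro i
  rcases lt_trichotomy (i + 1) w.length with hlt | heq | hgt
  · rw [cat_of_lt_length hlt, cat_of_lt_length (Nat.lt_of_succ_lt hlt)]
    exact List.isChain_iff_getElem.1 hw i hlt
  · have hi : i < w.length := by omega
    have hbound : cat w y (i + 1) = y 0 := by simpa [heq] using cat_length_add w y 0
    rw [hbound, cat_of_lt_length hi]
    refine hlast _ ?_
    simp [List.getLast?_eq_getElem?, ← heq]
  · obtain ⟨j, rfl⟩ := Nat.exists_eq_add_of_le (Nat.le_of_lt_succ hgt)
    rw [add_assoc, cat_length_add, cat_length_add]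
    exact hy j

lemma cat_mem_sigmaPlus_of_mem_wordsFromTo {y : ℕ → W} (hy : y ∈ SigmaPlus τ) {B b : W}
    (hb : τ b (y 0)) {w : List W} (hw : w ∈ wordsFromTo τ B b) : cat w y ∈ SigmaPlus τ := by
  refine cat_mem_sigmaPlus hy hw.2.1 fun b' hb' => ?_
  rw [hw.2.2.2, Option.mem_some_iff] at hb'
  rwa [← hb']

lemma cat_apply_zero_of_mem_wordsFromTo {B b : W} {w : List W} (hw : w ∈ wordsFromTo τ B b)
    (y : ℕ → W) : cat w y 0 = B := by
  cases w with
  | nil => exact absurd hw (nil_notMem_wordsFromTo B b)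
  | cons b' w => simpa [cat_cons_zero] using hw.2.2.1

lemma wprod_append [Monoid G] (s : W → G) (u v : List W) :
    wprod s (u ++ v) = wprod s u * wprod s v := by
  simp [wprod]

-- Every `Xu.vx` lies on the orbit of `X.wx` with `w = uv`.
lemma shiftZ_iterate_tsPoint_nil (X : ℤ → W) (x : ℕ → W) (u v : List W) :
    shiftZ^[u.length] (tsPoint X x [] (u ++ v)) = tsPoint X x u v := by
  have iterate_apply (n : ℕ) (z : ℤ → W) (i : ℤ) : shiftZ^[n] z i = z (i + n) := by
    induction n generalizing i with
    | zero => simp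
    | succ n ih => rw [Function.iterate_succ_apply', shiftZ, ih]; push_cast; ring_nf
  funext i
  rw [iterate_apply]
  rcases le_or_gt 0 i with hi | hi
  · obtain ⟨j, rfl⟩ := Int.eq_ofNat_of_zero_le hi
    have hj : ((j : ℤ) + u.length).toNat = u.length + j := by omega
    simp only [tsPoint, if_pos hi, if_pos (show 0 ≤ (j : ℤ) + u.length by omega), hj, cat_append,
      cat_length_add, Int.toNat_natCast]
  rcases le_or_gt 0 (i + u.length) with hiu | hiu
  · have hlt : (i + u.length).toNat < u.length := by omega
    have hidx : u.length - (-i).toNat = (i + u.length).toNat := by omega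
    simp only [tsPoint, if_pos hiu, if_neg hi.not_ge, cat_append, cat_of_lt_length hlt,
      List.get_eq_getElem, hidx]
    rw [dif_pos (by omega)]
  · simp only [tsPoint, if_neg hiu.not_ge, if_neg hi.not_ge, List.length_nil]
    rw [dif_neg (by omega), dif_neg (by omega)]
    simp

end Words

section Weights

variable {τ : W → W → Prop} {R : (ℕ → W) → ℝ}

lemma shift_mem_sigmaPlus {y : ℕ → W} (hy : y ∈ SigmaPlus τ) : shift y ∈ SigmaPlus τ :=
  fun i => hy (i + 1)

lemma weight_zero (R : (ℕ → W) → ℝ) (y : ℕ → W) : weight R 0 y = 1 := by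
  simp [weight]

lemma weight_succ (R : (ℕ → W) → ℝ) (n : ℕ) (y : ℕ → W) :
    weight R (n + 1) y = R y * weight R n (shift y) := by
  simp [weight, Finset.prod_range_succ', mul_comm]

lemma weight_length_append (R : (ℕ → W) → ℝ) (u v : List W) (y : ℕ → W) :
    weight R (u ++ v).length (cat (u ++ v) y) =
      weight R v.length (cat v y) * weight R u.length (cat u (cat v y)) := by
  induction u with
  | nil => simp [cat_nil, weight_zero]
  | cons b u ih =>
    rw [List.cons_append, List.length_cons, List.length_cons, weight_succ, weight_succ,
      shift_cat_cons, shift_cat_cons, ih, ← List.cons_append, cat_append]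
    ring

lemma weight_nonneg (hR : ∀ y ∈ SigmaPlus τ, 0 ≤ R y) (n : ℕ) {y : ℕ → W}
    (hy : y ∈ SigmaPlus τ) : 0 ≤ weight R n y := by
  induction n generalizing y with
  | zero => simp [weight_zero]
  | succ n ih =>
    rw [weight_succ]
    exact mul_nonneg (hR y hy) (ih (shift_mem_sigmaPlus hy))

lemma weight_le_pow (hR : ∀ y ∈ SigmaPlus τ, 0 ≤ R y) {M : ℝ} (hM : ∀ y ∈ SigmaPlus τ, R y ≤ M)
    (n : ℕ) {y : ℕ → W} (hy : y ∈ SigmaPlus τ) : weight R n y ≤ M ^ n := by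
  induction n generalizing y with
  | zero => simp [weight_zero]
  | succ n ih =>
    rw [weight_succ, pow_succ']
    exact mul_le_mul (hM y hy) (ih (shift_mem_sigmaPlus hy))
      (weight_nonneg hR n (shift_mem_sigmaPlus hy)) ((hR y hy).trans (hM y hy))

/-- Bounded distortion (Bowen's property): the weight which `R` gives to a word `u` depends on the
tail following `u` only up to the factor `D`, among tails with the same first letter. -/
def BoundedDistortion (τ : W → W → Prop) (R : (ℕ → W) → ℝ) (D : ℝ) : Prop :=
  ∀ (u : List W) (y z : ℕ → W), y 0 = z 0 → cat u y ∈ SigmaPlus τ → cat u z ∈ SigmaPlus τ →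
    weight R u.length (cat u y) ≤ D * weight R u.length (cat u z)

namespace LocallyHolder

variable {C₀ θ : ℝ}

lemma le_exp_mul (hH : LocallyHolder τ R C₀ θ) (hR : ∀ y ∈ SigmaPlus τ, 0 < R y) {y z : ℕ → W}
    (hy : y ∈ SigmaPlus τ) (hz : z ∈ SigmaPlus τ) {n : ℕ} (hn : 2 ≤ n)
    (hyz : ∀ i < n, y i = z i) : R y ≤ Real.exp (C₀ * θ ^ n) * R z := by
  have hlog := (abs_le.1 (hH.2.2.2 y hy z hz n hn hyz)).2
  calc R y = Real.exp (Real.log (R y)) := (Real.exp_log (hR y hy)).symm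
    _ ≤ Real.exp (C₀ * θ ^ n + Real.log (R z)) := Real.exp_le_exp.2 (by linarith)
    _ = Real.exp (C₀ * θ ^ n) * R z := by rw [Real.exp_add, Real.exp_log (hR z hz)]

lemma weight_le_exp_sum_mul (hH : LocallyHolder τ R C₀ θ) (hR : ∀ y ∈ SigmaPlus τ, 0 < R y)
    (u : List W) {y z : ℕ → W} (hyz : y 0 = z 0) (hy : cat u y ∈ SigmaPlus τ)
    (hz : cat u z ∈ SigmaPlus τ) :
    weight R u.length (cat u y) ≤
      Real.exp (∑ i ∈ Finset.range u.length, C₀ * θ ^ (i + 2)) * weight R u.length (cat u z) := by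
  induction u with
  | nil => simp [weight_zero]
  | cons b u ih =>
    have hy' : cat u y ∈ SigmaPlus τ := shift_cat_cons b u y ▸ shift_mem_sigmaPlus hy
    have hz' : cat u z ∈ SigmaPlus τ := shift_cat_cons b u z ▸ shift_mem_sigmaPlus hz
    have hfirst := hH.le_exp_mul hR hy hz (n := u.length + 2) (by omega)
      fun i hi => cat_eq_of_le_length (b :: u) hyz (Nat.lt_succ_iff.1 hi)
    rw [List.length_cons, weight_succ, weight_succ, shift_cat_cons, shift_cat_cons,
      Finset.sum_range_succ, Real.exp_add]
    calc R (cat (b :: u) y) * weight R u.length (cat u y)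
        ≤ Real.exp (C₀ * θ ^ (u.length + 2)) * R (cat (b :: u) z) *
          (Real.exp (∑ i ∈ Finset.range u.length, C₀ * θ ^ (i + 2)) *
            weight R u.length (cat u z)) :=
          mul_le_mul hfirst (ih hy' hz') (weight_nonneg (fun y hy => (hR y hy).le) _ hy')
            (mul_pos (Real.exp_pos _) (hR _ hz)).le
      _ = _ := by ring

lemma boundedDistortion (hH : LocallyHolder τ R C₀ θ) (hR : ∀ y ∈ SigmaPlus τ, 0 < R y) :
    BoundedDistortion τ R (Real.exp (C₀ * (1 - θ)⁻¹)) := by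
  intro u y z hyz hy hz
  have ⟨hC, hθ, hθ1, _⟩ := hH
  refine (hH.weight_le_exp_sum_mul hR u hyz hy hz).trans ?_
  refine mul_le_mul_of_nonneg_right (Real.exp_le_exp.2 ?_)
    (weight_nonneg (fun y hy => (hR y hy).le) _ hz)
  rw [← Finset.mul_sum]
  refine mul_le_mul_of_nonneg_left ?_ hC.le
  calc ∑ i ∈ Finset.range u.length, θ ^ (i + 2)
      ≤ ∑ i ∈ Finset.range u.length, θ ^ i :=
        Finset.sum_le_sum fun i _ => pow_le_pow_of_le_one hθ.le hθ1.le (by omega)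
    _ ≤ ∑' i, θ ^ i :=
        (summable_geometric_of_lt_one hθ.le hθ1).sum_le_tsum _ fun i _ => by positivity
    _ = (1 - θ)⁻¹ := tsum_geometric_of_lt_one hθ.le hθ1

lemma bddAbove_image [Finite W] (hH : LocallyHolder τ R C₀ θ) (hR : ∀ y ∈ SigmaPlus τ, 0 < R y) :
    BddAbove (R '' SigmaPlus τ) := by
  let cyl (p : W × W) : Set (ℕ → W) := {y | y ∈ SigmaPlus τ ∧ y 0 = p.1 ∧ y 1 = p.2}
  have hcyl (p : W × W) : BddAbove (R '' cyl p) := by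
    rcases (cyl p).eq_empty_or_nonempty with hempty | ⟨z, hz, hz0, hz1⟩
    · simp [hempty]
    refine ⟨Real.exp (C₀ * θ ^ 2) * R z, ?_⟩
    rintro _ ⟨y, ⟨hy, hy0, hy1⟩, rfl⟩
    refine hH.le_exp_mul hR hy hz le_rfl fun i hi => ?_
    interval_cases i
    · rw [hy0, hz0]
    · rw [hy1, hz1]
  have hcover : R '' SigmaPlus τ ⊆ ⋃ p, R '' cyl p := by
    rintro _ ⟨y, hy, rfl⟩
    exact Set.mem_iUnion.2 ⟨(y 0, y 1), y, ⟨hy, rfl, rfl⟩, rfl⟩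
  refine BddAbove.mono hcover ?_
  simpa using (Set.finite_univ.bddAbove_biUnion (S := fun p => R '' cyl p)).2 fun p _ => hcyl p

end LocallyHolder

end Weights

section Sums

variable {ι : Type*}

lemma iSup_tsum {h : ℕ → ι → ℝ≥0∞} (hh : Monotone h) :
    ⨆ N, ∑' i, h N i = ∑' i, ⨆ N, h N i := by
  let _ : MeasurableSpace ι := ⊤
  simpa only [lintegral_count] using
    (lintegral_iSup (μ := Measure.count) (fun _ => measurable_from_top) hh).symm

section Exhaustion

variable {E : ℕ → Set ι}

lemma iSup_tsum_indicator (hE : Monotone E) (hE' : ⋃ N, E N = Set.univ) (h : ι → ℝ≥0∞) :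
    ⨆ N, ∑' i, (E N).indicator h i = ∑' i, h i := by
  rw [iSup_tsum fun N M hNM i =>
    Set.indicator_le_indicator_of_subset (hE hNM) (fun _ => zero_le) i]
  simp_rw [← Set.indicator_iUnion_apply bot_eq_zero, hE', Set.indicator_univ]

lemma tendsto_tsum_indicator (hE : Monotone E) (hE' : ⋃ N, E N = Set.univ) (h : ι → ℝ≥0∞) :
    Tendsto (fun N => ∑' i, (E N).indicator h i) atTop (nhds (∑' i, h i)) := by
  rw [← iSup_tsum_indicator hE hE' h]
  exact tendsto_atTop_iSup fun N M hNM => ENNReal.tsum_le_tsum fun i =>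
    Set.indicator_le_indicator_of_subset (hE hNM) (fun _ => zero_le) i

end Exhaustion

lemma tsum_append_length {g : List ι → ℕ → ℝ≥0∞} (hg : ∀ w m, w.length < m → g w m = 0) :
    ∑' p : List ι × List ι, g (p.1 ++ p.2) p.1.length = ∑' w, ∑' m, g w m := by
  have hinj : Function.Injective
      fun p : List ι × List ι => (p.1 ++ p.2, p.1.length) := fun p q hpq => by
    obtain ⟨happ, hlen⟩ := Prod.mk.inj hpq
    exact Prod.ext_iff.2 (List.append_inj happ hlen)
  rw [← ENNReal.tsum_prod]
  refine hinj.tsum_eq (f := fun p : List ι × ℕ => g p.1 p.2) fun p hp => ?_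
  have hle : p.2 ≤ p.1.length := not_lt.1 fun hlt => hp (hg _ _ hlt)
  exact ⟨(p.1.take p.2, p.1.drop p.2), by simp [hle]⟩

lemma tsum_pow_length [Fintype ι] (q : ℝ≥0∞) :
    ∑' w : List ι, q ^ w.length = ∑' n : ℕ, (Fintype.card ι * q) ^ n := by
  rw [← (Equiv.sigmaFiberEquiv (List.length (α := ι))).tsum_eq, ENNReal.tsum_sigma']
  refine tsum_congr fun n => ?_
  calc ∑' w : {w : List ι // w.length = n}, q ^ w.1.length
      = ∑' _ : List.Vector ι n, q ^ n := tsum_congr fun w => by rw [w.2]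
    _ = (Fintype.card ι * q) ^ n := by
      rw [tsum_fintype, Finset.sum_const, Finset.card_univ, card_vector, nsmul_eq_mul, mul_pow,
        Nat.cast_pow]

lemma tsum_mul_le_mul_tsum_add_card_mul {g h p : ι → ℝ≥0∞} {a C : ℝ≥0∞} {s : Finset ι}
    (hgh : ∀ i, g i ≤ a * h i + (s : Set ι).indicator (fun _ => C) i) (hp : ∀ i, p i ≤ 1) :
    ∑' i, g i * p i ≤ a * ∑' i, h i * p i + s.card * C := by
  have hindicator : ∑' i, (s : Set ι).indicator (fun _ => C) i = s.card * C := by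
    rw [← sum_eq_tsum_indicator, Finset.sum_const, nsmul_eq_mul]
  rw [← hindicator, ← ENNReal.tsum_mul_left, ← ENNReal.tsum_add]
  refine ENNReal.tsum_le_tsum fun i => ?_
  calc g i * p i ≤ (a * h i + (s : Set ι).indicator (fun _ => C) i) * p i := by gcongr; exact hgh i
    _ ≤ a * (h i * p i) + (s : Set ι).indicator (fun _ => C) i := by
      rw [add_mul, mul_assoc]
      gcongr
      exact mul_le_of_le_one_right' (hp i)

end Sums

section Coefficients

section Splitting

-- When `d 0 = 0`, the products `d m * d (L - m)` vanish unless `0 < m < L`.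
variable {d : ℕ → ℝ≥0∞}

lemma le_mul_add_indicator_of_slow (hd : Monotone d) {a : ℝ≥0∞} {K : ℕ}
    (hslow : ∀ n, K ≤ n → d (n + 1) ≤ a * d n) (n : ℕ) :
    d (n + 1) ≤ a * d n + (Set.Iio K).indicator (fun _ => d K) n := by
  rcases lt_or_ge n K with hn | hn
  · rw [Set.indicator_of_mem (Set.mem_Iio.2 hn)]
    exact (hd hn).trans le_add_self
  · exact (hslow n hn).trans le_self_add

lemma splitting_succ_le (hd : Monotone d) {a : ℝ≥0∞} {K : ℕ}
    (hslow : ∀ n, K ≤ n → d (n + 1) ≤ a * d n) (L m : ℕ) : d (m + 1) * d (L - (m + 1)) ≤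
      a * (d m * d (L - m)) + (Finset.range K : Set ℕ).indicator (fun _ => d K * d L) m := by
  have hK : (Set.Iio K).indicator (fun _ => d K) m * d L =
      (Finset.range K : Set ℕ).indicator (fun _ => d K * d L) m := by
    rw [Finset.coe_range, Set.indicator_mul_const]
  calc d (m + 1) * d (L - (m + 1))
      ≤ (a * d m + (Set.Iio K).indicator (fun _ => d K) m) * d (L - (m + 1)) := by
        gcongr
        exact le_mul_add_indicator_of_slow hd hslow m
    _ ≤ a * (d m * d (L - m)) + (Set.Iio K).indicator (fun _ => d K) m * d L := by
        rw [add_mul, mul_assoc]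
        gcongr <;> exact hd (by omega)
    _ = _ := by rw [hK]

lemma splitting_le_succ (hd : Monotone d) (h0 : d 0 = 0) {a : ℝ≥0∞} {K : ℕ}
    (hslow : ∀ n, K ≤ n → d (n + 1) ≤ a * d n) (L m : ℕ) : d m * d (L - m) ≤
      a * (d (m + 1) * d (L - (m + 1))) +
        (Finset.Ico (L - K) L : Set ℕ).indicator (fun _ => d K * d L) m := by
  rcases le_or_gt L m with hm | hm
  · simp [Nat.sub_eq_zero_of_le hm, h0]
  have hK : d L * (Set.Iio K).indicator (fun _ => d K) (L - (m + 1)) =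
      (Finset.Ico (L - K) L : Set ℕ).indicator (fun _ => d K * d L) m := by
    have hiff : L - (m + 1) ∈ Set.Iio K ↔ m ∈ (Finset.Ico (L - K) L : Set ℕ) := by
      simp only [Set.mem_Iio, Finset.coe_Ico, Set.mem_Ico]
      omega
    by_cases hmem : L - (m + 1) ∈ Set.Iio K
    · rw [Set.indicator_of_mem hmem, Set.indicator_of_mem (hiff.1 hmem), mul_comm]
    · rw [Set.indicator_of_notMem hmem, Set.indicator_of_notMem (hmem ∘ hiff.2), mul_zero]
  calc d m * d (L - m) = d m * d (L - (m + 1) + 1) := by rw [show L - m = L - (m + 1) + 1 by omega]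
    _ ≤ d m * (a * d (L - (m + 1)) + (Set.Iio K).indicator (fun _ => d K) (L - (m + 1))) := by
        gcongr
        exact le_mul_add_indicator_of_slow hd hslow _
    _ ≤ a * (d (m + 1) * d (L - (m + 1))) +
          d L * (Set.Iio K).indicator (fun _ => d K) (L - (m + 1)) := by
        rw [mul_add, mul_left_comm]
        gcongr <;> exact hd (by omega)
    _ = _ := by rw [hK]

lemma tsum_splitting_mul_succ_le (hd : Monotone d) (h0 : d 0 = 0) {a : ℝ≥0∞} {K : ℕ}
    (hslow : ∀ n, K ≤ n → d (n + 1) ≤ a * d n) {p : ℕ → ℝ≥0∞} (hp : ∀ m, p m ≤ 1) (L : ℕ) :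
    ∑' m, d m * d (L - m) * p (m + 1) ≤
      a * ∑' m, d m * d (L - m) * p m + K * (d K * d L) := by
  refine (tsum_mul_le_mul_tsum_add_card_mul (splitting_le_succ hd h0 hslow L)
    fun m => hp (m + 1)).trans ?_
  gcongr a * ?_ + ?_ * _
  · exact ENNReal.tsum_comp_le_tsum_of_injective (add_left_injective 1)
      fun m => d m * d (L - m) * p m
  · rw [Nat.card_Ico]
    exact_mod_cast Nat.sub_le_iff_le_add.2 (by omega)

lemma tsum_splitting_mul_le_succ (hd : Monotone d) (h0 : d 0 = 0) {a : ℝ≥0∞} {K : ℕ}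
    (hslow : ∀ n, K ≤ n → d (n + 1) ≤ a * d n) {p : ℕ → ℝ≥0∞} (hp : ∀ m, p m ≤ 1) (L : ℕ) :
    ∑' m, d m * d (L - m) * p m ≤
      a * ∑' m, d m * d (L - m) * p (m + 1) + K * (d K * d L) := by
  rw [tsum_eq_zero_add' ENNReal.summable, h0, zero_mul, zero_mul, zero_add]
  simpa using tsum_mul_le_mul_tsum_add_card_mul (splitting_succ_le hd hslow L)
    fun m => hp (m + 1)

lemma tsum_splitting_le (hd : Monotone d) (h0 : d 0 = 0) (L : ℕ) :
    ∑' m, d m * d (L - m) ≤ L * (d L * d L) := by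
  rw [tsum_eq_sum (s := Finset.range L) fun m hm => by
    simp [Nat.sub_eq_zero_of_le (not_lt.1 (hm ∘ Finset.mem_range.2)), h0]]
  refine (Finset.sum_le_card_nsmul _ _ (d L * d L) fun m hm => ?_).trans (by simp)
  exact mul_le_mul' (hd (Finset.mem_range.1 hm).le) (hd (Nat.sub_le L m))

end Splitting

/-- The coefficient sequence `c` in `ℝ≥0∞`, extended by `0` at `n = 0`: words are nonempty, and with
this convention `coeffE c m * coeffE c (L - m)` vanishes unless a word of length `L` can be cut into
two nonempty words at `m`. -/
noncomputable def coeffE (c : ℕ → ℝ) (n : ℕ) : ℝ≥0∞ :=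
  if n = 0 then 0 else ENNReal.ofReal (c n)

lemma coeffE_zero (c : ℕ → ℝ) : coeffE c 0 = 0 := if_pos rfl

lemma coeffE_of_ne_zero (c : ℕ → ℝ) {n : ℕ} (hn : n ≠ 0) : coeffE c n = ENNReal.ofReal (c n) :=
  if_neg hn

lemma coeffE_le_ofReal (c : ℕ → ℝ) (n : ℕ) : coeffE c n ≤ ENNReal.ofReal (c n) := by
  unfold coeffE
  split_ifs <;> simp

lemma coeffE_ne_top (c : ℕ → ℝ) (n : ℕ) : coeffE c n ≠ ⊤ :=
  ne_top_of_le_ne_top ENNReal.ofReal_ne_top (coeffE_le_ofReal c n)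

lemma monotone_coeffE {c : ℕ → ℝ} (hc : Monotone c) : Monotone (coeffE c) := by
  intro m n hmn
  rcases eq_or_ne m 0 with rfl | hm
  · simp [coeffE_zero]
  · rw [coeffE_of_ne_zero c hm, coeffE_of_ne_zero c (by omega)]
    exact ENNReal.ofReal_le_ofReal (hc hmn)

namespace SlowlyIncreasing

variable {c : ℕ → ℝ}

lemma exists_coeffE_succ_le (hc : SlowlyIncreasing c) {a : ℝ≥0} (ha : 1 < a) :
    ∃ K, ∀ n, K ≤ n → coeffE c (n + 1) ≤ a * coeffE c n := by
  have hratio : ∀ᶠ n in atTop, c (n + 1) / c n < a := (hc.2.2.2 1).eventually_lt_const ha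
  obtain ⟨K, hK⟩ := eventually_atTop.1 (hratio.and (eventually_ne_atTop 0))
  refine ⟨K, fun n hn => ?_⟩
  have ⟨hlt, hn0⟩ := hK n hn
  rw [coeffE_of_ne_zero c n.succ_ne_zero, coeffE_of_ne_zero c hn0, ← ENNReal.ofReal_coe_nnreal,
    ← ENNReal.ofReal_mul a.coe_nonneg]
  exact ENNReal.ofReal_le_ofReal ((div_lt_iff₀ (hc.1 n)).1 hlt).le

lemma summable_mul_sq_mul_pow (hc : SlowlyIncreasing c) {q : ℝ} (hq : 0 < q) (hq1 : q < 1) :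
    Summable fun L : ℕ => L * (c L * c L) * q ^ L := by
  have hcpos := hc.1
  have hpos {n : ℕ} (hn : 1 ≤ n) : 0 < n * (c n * c n) * q ^ n := by
    have := hcpos n
    positivity
  refine summable_of_ratio_test_tendsto_lt_one hq1 ?_ ?_
  · filter_upwards [eventually_ge_atTop 1] with n hn using (hpos hn).ne'
  have hlim : Tendsto (fun n : ℕ => (1 + 1 / (n : ℝ)) *
      (c (n + 1) / c n * (c (n + 1) / c n)) * q) atTop (nhds ((1 + 0) * (1 * 1) * q)) :=
    ((tendsto_const_nhds.add tendsto_one_div_atTop_nhds_zero_nat).mul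
      ((hc.2.2.2 1).mul (hc.2.2.2 1))).mul_const q
  rw [add_zero, one_mul, one_mul, one_mul] at hlim
  refine hlim.congr' ?_
  filter_upwards [eventually_ge_atTop 1] with n hn
  rw [Real.norm_of_nonneg (hpos (Nat.le_add_left 1 n)).le, Real.norm_of_nonneg (hpos hn).le]
  have := (hcpos n).ne'
  have : (n : ℝ) ≠ 0 := by positivity
  push_cast
  field_simp
  ring

lemma exists_mul_sq_mul_pow_le (hc : SlowlyIncreasing c) {q : ℝ} (hq : 0 < q) (hq1 : q < 1) :
    ∃ C : ℝ, ∀ L : ℕ, L * (c L * c L) * q ^ L ≤ C :=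
  let ⟨C, hC⟩ := (hc.summable_mul_sq_mul_pow hq hq1).tendsto_atTop_zero.bddAbove_range
  ⟨C, fun L => hC ⟨L, rfl⟩⟩

end SlowlyIncreasing

end Coefficients

section MatrixCoefficients

variable [Group G] {I : Type*} [MulAction G I]

/-- The matrix coefficient `⟨ρ(g)f, f⟩` of the permutation representation on functions on `I`. -/
noncomputable def matrixCoeff (f : I → ℝ≥0∞) (g : G) : ℝ≥0∞ :=
  innerE (fun i => f (g⁻¹ • i)) f

lemma innerE_convE (φ : G → ℝ≥0∞) (f : I → ℝ≥0∞) :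
    innerE (convE (fun g i => g • i) φ f) f = ∑' g, φ g * matrixCoeff f g := by
  simp_rw [matrixCoeff, innerE, convE, ← ENNReal.tsum_mul_right, ← ENNReal.tsum_mul_left]
  rw [ENNReal.tsum_comm]
  simp_rw [mul_assoc]

lemma matrixCoeff_mul (f : I → ℝ≥0∞) (h g : G) :
    matrixCoeff f (h * g) = ∑' i, f (g⁻¹ • i) * f (h • i) := by
  rw [matrixCoeff, innerE, ← (MulAction.toPerm h).tsum_eq]
  simp [smul_smul]

lemma innerE_convE_phiStar (φ : G → ℝ≥0∞) (f : I → ℝ≥0∞) :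
    innerE (convE (fun g i => g • i) φ f) (convE (fun g i => g • i) (phiStar φ) f) =
      ∑' g, φ g * ∑' h, φ h * matrixCoeff f (h * g) := by
  have hstar (i : I) : convE (fun (g : G) i => g • i) (phiStar φ) f i = ∑' h, φ h * f (h • i) :=
    (Equiv.inv G).tsum_eq fun h => φ h * f (h • i)
  simp_rw [innerE, hstar, convE, matrixCoeff_mul, ← ENNReal.tsum_mul_right,
    ← ENNReal.tsum_mul_left]
  rw [ENNReal.tsum_comm]
  refine tsum_congr fun g => ?_
  rw [ENNReal.tsum_comm]
  exact tsum_congr fun h => tsum_congr fun i => by ring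

lemma matrixCoeff_le (f : I → ℝ≥0∞) (g : G) : matrixCoeff f g ≤ 2 * normSqE f := by
  have hinv : ∑' i, f (g⁻¹ • i) * f (g⁻¹ • i) = normSqE f :=
    (MulAction.toPerm g⁻¹).tsum_eq fun i => f i * f i
  calc matrixCoeff f g ≤ ∑' i, (f (g⁻¹ • i) * f (g⁻¹ • i) + f i * f i) := by
        refine ENNReal.tsum_le_tsum fun i => ?_
        rcases le_total (f (g⁻¹ • i)) (f i) with h | h
        · exact le_add_left (by gcongr)
        · exact le_add_right (by gcongr)
    _ = 2 * normSqE f := by rw [ENNReal.tsum_add, hinv, two_mul, normSqE, innerE]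

end MatrixCoefficients

section Density

variable {τ : W → W → Prop} {R : (ℕ → W) → ℝ} {A a : W} {x : ℕ → W}

/-- The contribution `t⁻ⁿ R_n(wx)` of an admissible word `w` of length `n` from `A` to `a` to the
`G`-density with `c ≡ 1`; all other words get weight `0`. -/
noncomputable def wordWeight (τ : W → W → Prop) (R : (ℕ → W) → ℝ) (A a : W) (x : ℕ → W) (t : ℝ) :
    List W → ℝ≥0∞ :=
  (wordsFromTo τ A a).indicator fun w =>
    (ENNReal.ofReal t)⁻¹ ^ w.length * ENNReal.ofReal (weight R w.length (cat w x))

lemma wordWeight_of_mem {t : ℝ} {w : List W} (hw : w ∈ wordsFromTo τ A a) :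
    wordWeight τ R A a x t w =
      (ENNReal.ofReal t)⁻¹ ^ w.length * ENNReal.ofReal (weight R w.length (cat w x)) :=
  Set.indicator_of_mem hw _

lemma wordWeight_of_notMem {t : ℝ} {w : List W} (hw : w ∉ wordsFromTo τ A a) :
    wordWeight τ R A a x t w = 0 :=
  Set.indicator_of_notMem hw _

lemma wordWeight_eq_mul_of_pos {t t' : ℝ} (ht : 0 < t) (ht' : 0 < t') (w : List W) :
    wordWeight τ R A a x t w =
      ENNReal.ofReal ((t' / t) ^ w.length) * wordWeight τ R A a x t' w := by
  by_cases hw : w ∈ wordsFromTo τ A a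
  · have hpow : (ENNReal.ofReal t)⁻¹ ^ w.length =
        ENNReal.ofReal ((t' / t) ^ w.length) * (ENNReal.ofReal t')⁻¹ ^ w.length := by
      rw [ENNReal.ofReal_pow (by positivity), ← mul_pow, div_eq_mul_inv, mul_comm t',
        ENNReal.ofReal_mul (by positivity), mul_assoc,
        ENNReal.mul_inv_cancel (by simpa) ENNReal.ofReal_ne_top, mul_one,
        ENNReal.ofReal_inv_of_pos ht]
    rw [wordWeight_of_mem hw, wordWeight_of_mem hw, hpow, mul_assoc]
  · rw [wordWeight_of_notMem hw, wordWeight_of_notMem hw, mul_zero]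

lemma wordWeight_mul_le {D : ℝ} (hR : ∀ y ∈ SigmaPlus τ, 0 ≤ R y) (hD : BoundedDistortion τ R D)
    (hx : x ∈ SigmaPlus τ) (hxA : x 0 = A) (haA : τ a A) (t : ℝ) (u v : List W) :
    wordWeight τ R A a x t u * wordWeight τ R A a x t v ≤
      ENNReal.ofReal D * wordWeight τ R A a x t (u ++ v) := by
  by_cases hu : u ∈ wordsFromTo τ A a
  swap
  · simp [wordWeight_of_notMem hu]
  by_cases hv : v ∈ wordsFromTo τ A a
  swap
  · simp [wordWeight_of_notMem hv]
  have hnil {w : List W} (hw : w ∈ wordsFromTo τ A a) : w ≠ [] := by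
    rintro rfl
    exact nil_notMem_wordsFromTo _ _ hw
  have huv := (append_mem_wordsFromTo_iff (hnil hu) (hnil hv)).2 ⟨a, A, haA, hu, hv⟩
  have hmem {w : List W} (hw : w ∈ wordsFromTo τ A a) : cat w x ∈ SigmaPlus τ :=
    cat_mem_sigmaPlus_of_mem_wordsFromTo hx (hxA ▸ haA) hw
  have hweight : ENNReal.ofReal (weight R u.length (cat u x)) *
        ENNReal.ofReal (weight R v.length (cat v x)) ≤
      ENNReal.ofReal D * ENNReal.ofReal (weight R (u ++ v).length (cat (u ++ v) x)) := by
    have hvx := weight_nonneg hR v.length (hmem hv)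
    have hux := hD u x (cat v x) (by rw [hxA, cat_apply_zero_of_mem_wordsFromTo hv]) (hmem hu)
      (cat_append u v x ▸ hmem huv)
    rw [← ENNReal.ofReal_mul' hvx, ← ENNReal.ofReal_mul' (weight_nonneg hR _ (hmem huv)),
      weight_length_append, mul_left_comm, mul_comm]
    exact ENNReal.ofReal_le_ofReal (mul_le_mul_of_nonneg_left hux hvx)
  rw [wordWeight_of_mem hu, wordWeight_of_mem hv, wordWeight_of_mem huv, mul_mul_mul_comm,
    ← pow_add, ← List.length_append]
  exact (mul_le_mul_right hweight _).trans_eq (mul_left_comm _ _ _)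

variable [Group G] (s : W → G)

lemma tsum_wordSetC_eq_tsum_indicator (c : ℕ → ℝ) (t : ℝ) {n : ℕ} (hn : n ≠ 0) (g : G) :
    (ENNReal.ofReal t)⁻¹ ^ n * ENNReal.ofReal (c n) *
        ∑' w : {w : List W // w ∈ WordSetC τ n A a ∧ wprod s w = g},
          ENNReal.ofReal (weight R n (cat w.1 x)) =
      ∑' w, {w | w.length = n ∧ wprod s w = g}.indicator
        (fun w => coeffE c w.length * wordWeight τ R A a x t w) w := by
  refine Eq.trans (congrArg _ (tsum_subtype {w | w ∈ WordSetC τ n A a ∧ wprod s w = g}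
    fun w => ENNReal.ofReal (weight R n (cat w x)))) ?_
  rw [← ENNReal.tsum_mul_left]
  refine tsum_congr fun w => ?_
  by_cases hw : w ∈ {w | w.length = n ∧ wprod s w = g}
  · rw [Set.indicator_of_mem hw]
    obtain ⟨rfl, hg⟩ := hw
    by_cases hmem : w ∈ wordsFromTo τ A a
    · rw [Set.indicator_of_mem (show w ∈ {w' | w' ∈ WordSetC τ w.length A a ∧ wprod s w' = g} from
        ⟨hmem, hg⟩), wordWeight_of_mem hmem, coeffE_of_ne_zero c hn]
      ring
    · rw [Set.indicator_of_notMem fun h => hmem h.1, wordWeight_of_notMem hmem, mul_zero, mul_zero]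
  · rw [Set.indicator_of_notMem fun h => hw ⟨h.1.1, h.2⟩, Set.indicator_of_notMem hw, mul_zero]

lemma phiLeC_eq_tsum (c : ℕ → ℝ) (t : ℝ) (N : ℕ) (g : G) :
    phiLeC τ R s A a x c t N g = ∑' w, {w | w.length ≤ N ∧ wprod s w = g}.indicator
      (fun w => coeffE c w.length * wordWeight τ R A a x t w) w := by
  classical
  rw [phiLeC, Finset.sum_congr rfl fun n hn => tsum_wordSetC_eq_tsum_indicator s c t
      (Nat.one_le_iff_ne_zero.1 (Finset.mem_Icc.1 hn).1) g,
    ← Summable.tsum_finsetSum fun _ _ => ENNReal.summable]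
  refine tsum_congr fun w => ?_
  simp only [Set.indicator_apply, Set.mem_ofPred_eq, ite_and, Finset.sum_ite_eq, Finset.mem_Icc]
  by_cases hw : w.length = 0
  · simp [hw, coeffE_zero]
  · simp [Nat.one_le_iff_ne_zero, hw]

lemma tsum_phiLeC_mul (c : ℕ → ℝ) (t : ℝ) (N : ℕ) (k : G → ℝ≥0∞) :
    ∑' g, phiLeC τ R s A a x c t N g * k g = ∑' w, {w : List W | w.length ≤ N}.indicator
      (fun w => coeffE c w.length * wordWeight τ R A a x t w * k (wprod s w)) w := by
  simp_rw [phiLeC_eq_tsum, ← ENNReal.tsum_mul_right]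
  rw [ENNReal.tsum_comm]
  refine tsum_congr fun w => ?_
  rw [tsum_eq_single (wprod s w) fun g hg => by
    rw [Set.indicator_of_notMem fun h => hg h.2.symm, zero_mul]]
  by_cases hw : w.length ≤ N <;> simp [hw]

lemma tsum_phiLeC_mul_le (c : ℕ → ℝ) (t : ℝ) (N : ℕ) (k : G → ℝ≥0∞) :
    ∑' g, phiLeC τ R s A a x c t N g * k g ≤
      ∑' w, coeffE c w.length * wordWeight τ R A a x t w * k (wprod s w) := by
  rw [tsum_phiLeC_mul]
  exact ENNReal.tsum_le_tsum fun w => Set.indicator_le_self _ _ w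

variable {I : Type*} [MulAction G I]

/-- The weight `t⁻ⁿ R_n(wx) ⟨ρ(𝔰̲(w))f, f⟩` of a word `w` from `A` to `a`, so that
`⟨φ_c[t] ∗_ρ f, f⟩` is the sum over all words of `c_n` times this weight. -/
noncomputable def loopWeight (τ : W → W → Prop) (R : (ℕ → W) → ℝ) (s : W → G) (A a : W)
    (x : ℕ → W) (f : I → ℝ≥0∞) (t : ℝ) (w : List W) : ℝ≥0∞ :=
  wordWeight τ R A a x t w * matrixCoeff f (wprod s w)

lemma iSup_innerE_convE (f : I → ℝ≥0∞) (c : ℕ → ℝ) (t : ℝ) :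
    ⨆ N, innerE (convE (fun g i => g • i) (phiLeC τ R s A a x c t N) f) f =
      ∑' w, coeffE c w.length * loopWeight τ R s A a x f t w := by
  simp_rw [innerE_convE, tsum_phiLeC_mul, loopWeight, mul_assoc]
  refine iSup_tsum_indicator (E := fun N => {w : List W | w.length ≤ N})
    (fun N M hNM w hw => le_trans hw hNM) ?_ _
  exact Set.iUnion_eq_univ_iff.2 fun w => ⟨w.length, le_refl w.length⟩

lemma iSup_innerE_convE_one (f : I → ℝ≥0∞) (t : ℝ) :
    ⨆ N, innerE (convE (fun g i => g • i) (phiLeC τ R s A a x (fun _ => 1) t N) f) f =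
      ∑' w, loopWeight τ R s A a x f t w := by
  rw [iSup_innerE_convE]
  refine tsum_congr fun w => ?_
  rcases eq_or_ne w [] with rfl | hw
  · simp [loopWeight, wordWeight_of_notMem (nil_notMem_wordsFromTo A a)]
  · simp [coeffE_of_ne_zero, hw]

lemma FstarVal_le_tsum (f : I → ℝ≥0∞) (c : ℕ → ℝ) (t : ℝ) :
    FstarVal (fun g i => g • i) τ R s A a x f c t ≤ ∑' p : List W × List W,
      coeffE c p.1.length * coeffE c p.2.length *
        (wordWeight τ R A a x t p.1 * wordWeight τ R A a x t p.2 *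
          matrixCoeff f (wprod s (p.1 ++ p.2))) := by
  refine iSup_le fun N => ?_
  rw [innerE_convE_phiStar, ENNReal.tsum_prod', ENNReal.tsum_comm]
  refine (tsum_phiLeC_mul_le s c t N _).trans (ENNReal.tsum_le_tsum fun v => ?_)
  refine (mul_le_mul_right (tsum_phiLeC_mul_le s c t N _) _).trans_eq ?_
  rw [← ENNReal.tsum_mul_left]
  refine tsum_congr fun u => ?_
  rw [wprod_append]
  ring

end Density

section WordPairs

/-- The pairs of words of length at most `N`, over which the `N`-th approximation sums. -/
def wordPairsLe (W : Type*) (N : ℕ) : Set (List W × List W) :=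
  {p | p.1.length ≤ N ∧ p.2.length ≤ N}

lemma monotone_wordPairsLe : Monotone (wordPairsLe W) :=
  fun _ _ hNM _ hp => ⟨hp.1.trans hNM, hp.2.trans hNM⟩

lemma iUnion_wordPairsLe : ⋃ N, wordPairsLe W N = Set.univ :=
  Set.iUnion_eq_univ_iff.2 fun p =>
    ⟨max p.1.length p.2.length, le_max_left _ _, le_max_right _ _⟩

end WordPairs

section SplitMeasure

variable [Group G] {I : Type*} [MulAction G I] (τ : W → W → Prop) (R : (ℕ → W) → ℝ) (s : W → G)
  (A a : W) (x : ℕ → W) (X : ℤ → W) (f : I → ℝ≥0∞) (c : ℕ → ℝ) (t : ℝ)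

/-- The weight `t^{-n-m} c_n c_m R_n(vx) R_m(uvx) ⟨ρ(𝔰̲(uv))f, f⟩` of the point `Xu.vx`, where
`p = (u, v)`. By the cocycle property it depends on the cutting place only through `c_n c_m`. -/
noncomputable def splitWeight (p : List W × List W) : ℝ≥0∞ :=
  coeffE c p.1.length * coeffE c p.2.length * loopWeight τ R s A a x f t (p.1 ++ p.2)

section

variable {τ R s A a x f c t}

lemma splitWeight_eq_of_append_mem (hc : ∀ n, 0 ≤ c n) {u v : List W} (hu : u ≠ []) (hv : v ≠ [])
    (huv : u ++ v ∈ wordsFromTo τ A a) :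
    splitWeight τ R s A a x f c t (u, v) =
      (ENNReal.ofReal t)⁻¹ ^ (v.length + u.length) * ENNReal.ofReal (c v.length * c u.length) *
          ENNReal.ofReal (weight R v.length (cat v x) * weight R u.length (cat u (cat v x))) *
          innerE (fun i => f ((wprod s u * wprod s v)⁻¹ • i)) f := by
  rw [← weight_length_append, ← wprod_append, splitWeight, loopWeight, wordWeight_of_mem huv,
    coeffE_of_ne_zero c (List.length_pos_iff.2 hu).ne',
    coeffE_of_ne_zero c (List.length_pos_iff.2 hv).ne', List.length_append,
    ENNReal.ofReal_mul (hc _), matrixCoeff]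
  ring

lemma splitWeight_eq_zero {u v : List W} (huv : u = [] ∨ v = [] ∨ u ++ v ∉ wordsFromTo τ A a) :
    splitWeight τ R s A a x f c t (u, v) = 0 := by
  rcases huv with rfl | rfl | huv
  · simp [splitWeight, coeffE_zero]
  · simp [splitWeight, coeffE_zero]
  · simp [splitWeight, loopWeight, wordWeight_of_notMem huv]

lemma muCN_summand (hc : ∀ n, 0 ≤ c n) (N : ℕ) (u v : List W) (F : ℝ≥0∞) :
    {q : ℕ × ℕ × List W × List W | 1 ≤ q.1 ∧ q.1 ≤ N ∧ 1 ≤ q.2.1 ∧ q.2.1 ≤ N ∧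
        ∃ B b : W, τ B b ∧ q.2.2.2 ∈ WordSetC τ q.2.1 A B ∧ q.2.2.1 ∈ WordSetC τ q.1 b a}.indicator
      (fun q => (ENNReal.ofReal t)⁻¹ ^ (q.1 + q.2.1) * ENNReal.ofReal (c q.1 * c q.2.1) *
        ENNReal.ofReal (weight R q.1 (cat q.2.2.1 x) *
          weight R q.2.1 (cat q.2.2.2 (cat q.2.2.1 x))) *
        innerE (fun i => f ((wprod s q.2.2.2 * wprod s q.2.2.1)⁻¹ • i)) f / F)
      (v.length, u.length, v, u) =
    (wordPairsLe W N).indicator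
      (fun p => F⁻¹ * splitWeight τ R s A a x f c t p) (u, v) := by
  by_cases huv : u ≠ [] ∧ v ≠ [] ∧ u ++ v ∈ wordsFromTo τ A a
  · obtain ⟨hu, hv, huv⟩ := huv
    have hsplit := (append_mem_wordsFromTo_iff hu hv).1 huv
    by_cases hN : u.length ≤ N ∧ v.length ≤ N
    · rw [Set.indicator_of_mem, Set.indicator_of_mem (show (u, v) ∈ wordPairsLe W N from hN),
        splitWeight_eq_of_append_mem hc hu hv huv, div_eq_mul_inv, mul_comm]
      exact ⟨List.length_pos_iff.2 hv, hN.2, List.length_pos_iff.2 hu, hN.1, hsplit⟩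
    · rw [Set.indicator_of_notMem fun h => hN ⟨h.2.2.2.1, h.2.1⟩,
        Set.indicator_of_notMem (a := (u, v)) hN]
  · rw [Set.indicator_of_notMem]
    · exact (Set.indicator_apply_eq_zero.2 fun _ => by
        rw [splitWeight_eq_zero (by tauto), mul_zero]).symm
    · rintro ⟨hv, -, hu, -, hsplit⟩
      have hu := List.length_pos_iff.1 hu
      have hv := List.length_pos_iff.1 hv
      exact huv ⟨hu, hv, (append_mem_wordsFromTo_iff hu hv).2 hsplit⟩

end

lemma indicator_preimage_shiftZ_iterate (S : Set (ℤ → W)) (z : ℤ → W) (m : ℕ) :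
    (shiftZ ⁻¹' S).indicator (1 : (ℤ → W) → ℝ≥0∞) (shiftZ^[m] z) =
      S.indicator 1 (shiftZ^[m + 1] z) := by
  rw [Function.iterate_succ_apply']
  rfl

variable [MeasurableSpace W]

/-- The limit of the approximating measures as `N → ∞`, without the normalising factor; this is
the paper's `F(φ*)[t] μ_c[t]`. -/
noncomputable def splitMeasure : Measure (ℤ → W) :=
  Measure.sum fun p : List W × List W =>
    splitWeight τ R s A a x f c t p • Measure.dirac (tsPoint X x p.1 p.2)

variable {τ R s A a x X f c t}

lemma splitMeasure_apply {S : Set (ℤ → W)} (hS : MeasurableSet S) :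
    splitMeasure τ R s A a x X f c t S = ∑' p : List W × List W,
      splitWeight τ R s A a x f c t p * S.indicator 1 (tsPoint X x p.1 p.2) := by
  simp_rw [splitMeasure, Measure.sum_apply _ hS, Measure.smul_apply, Measure.dirac_apply' _ hS,
    smul_eq_mul]

lemma splitMeasure_apply_eq_tsum_orbit {S : Set (ℤ → W)} (hS : MeasurableSet S) :
    splitMeasure τ R s A a x X f c t S = ∑' w, loopWeight τ R s A a x f t w *
      ∑' m, coeffE c m * coeffE c (w.length - m) *
        S.indicator 1 (shiftZ^[m] (tsPoint X x [] w)) := by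
  simp_rw [splitMeasure_apply hS, ← ENNReal.tsum_mul_left]
  rw [← tsum_append_length fun w m hm => by
    simp [Nat.sub_eq_zero_of_le hm.le, coeffE_zero]]
  refine tsum_congr fun p => ?_
  rw [shiftZ_iterate_tsPoint_nil, splitWeight, List.length_append, Nat.add_sub_cancel_left]
  ring

lemma splitMeasure_le_mul_add {S S' : Set (ℤ → W)} (hS : MeasurableSet S) (hS' : MeasurableSet S')
    {b : ℝ≥0∞} {K : ℕ}
    (horbit : ∀ (z : ℤ → W) (L : ℕ),
      ∑' m, coeffE c m * coeffE c (L - m) * S.indicator 1 (shiftZ^[m] z) ≤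
        b * ∑' m, coeffE c m * coeffE c (L - m) * S'.indicator 1 (shiftZ^[m] z) +
          K * (coeffE c K * coeffE c L)) :
    splitMeasure τ R s A a x X f c t S ≤ b * splitMeasure τ R s A a x X f c t S' +
      K * coeffE c K *
        ⨆ N, innerE (convE (fun g i => g • i) (phiLeC τ R s A a x c t N) f) f := by
  rw [splitMeasure_apply_eq_tsum_orbit hS,
    splitMeasure_apply_eq_tsum_orbit hS', iSup_innerE_convE,
    ← ENNReal.tsum_mul_left, ← ENNReal.tsum_mul_left, ← ENNReal.tsum_add]
  refine ENNReal.tsum_le_tsum fun w => ?_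
  refine (mul_le_mul_right (horbit (tsPoint X x [] w) w.length) _).trans_eq ?_
  ring

lemma splitMeasure_preimage_shiftZ_le (hc : Monotone c) {b : ℝ≥0∞} {K : ℕ}
    (hslow : ∀ n, K ≤ n → coeffE c (n + 1) ≤ b * coeffE c n)
    {S : Set (ℤ → W)} (hS : MeasurableSet S) (hS' : MeasurableSet (shiftZ ⁻¹' S)) :
    splitMeasure τ R s A a x X f c t (shiftZ ⁻¹' S) ≤ b * splitMeasure τ R s A a x X f c t S +
      K * coeffE c K *
        ⨆ N, innerE (convE (fun g i => g • i) (phiLeC τ R s A a x c t N) f) f := by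
  refine splitMeasure_le_mul_add hS' hS fun z L => ?_
  simp_rw [indicator_preimage_shiftZ_iterate]
  exact tsum_splitting_mul_succ_le (monotone_coeffE hc) (coeffE_zero c) hslow
    (p := fun m => S.indicator 1 (shiftZ^[m] z))
    (fun m => Set.indicator_apply_le fun _ => le_rfl) L

lemma splitMeasure_le_preimage_shiftZ (hc : Monotone c) {b : ℝ≥0∞} {K : ℕ}
    (hslow : ∀ n, K ≤ n → coeffE c (n + 1) ≤ b * coeffE c n)
    {S : Set (ℤ → W)} (hS : MeasurableSet S) (hS' : MeasurableSet (shiftZ ⁻¹' S)) :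
    splitMeasure τ R s A a x X f c t S ≤ b * splitMeasure τ R s A a x X f c t (shiftZ ⁻¹' S) +
      K * coeffE c K *
        ⨆ N, innerE (convE (fun g i => g • i) (phiLeC τ R s A a x c t N) f) f := by
  refine splitMeasure_le_mul_add hS hS' fun z L => ?_
  simp_rw [indicator_preimage_shiftZ_iterate]
  exact tsum_splitting_mul_le_succ (monotone_coeffE hc) (coeffE_zero c) hslow
    (p := fun m => S.indicator 1 (shiftZ^[m] z))
    (fun m => Set.indicator_apply_le fun _ => le_rfl) L

lemma splitMeasure_univ_lt_top (hc : SlowlyIncreasing c) {t' : ℝ} (ht' : 0 < t') (htt' : t' < t)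
    (hfin : ⨆ N, innerE (convE (fun g i => g • i) (phiLeC τ R s A a x (fun _ => 1) t' N) f) f < ⊤) :
    splitMeasure τ R s A a x X f c t Set.univ < ⊤ := by
  have ht : 0 < t := ht'.trans htt'
  obtain ⟨C, hC⟩ := hc.exists_mul_sq_mul_pow_le (div_pos ht' ht) ((div_lt_one ht).2 htt')
  have hlength (L : ℕ) : ENNReal.ofReal ((t' / t) ^ L) *
      ∑' m, coeffE c m * coeffE c (L - m) ≤ ENNReal.ofReal C := by
    refine le_trans ?_ (ENNReal.ofReal_le_ofReal (hC L))
    have hcL := (hc.1 L).le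
    rw [ENNReal.ofReal_mul (by positivity), ENNReal.ofReal_mul (by positivity),
      ENNReal.ofReal_mul hcL, ENNReal.ofReal_natCast, mul_comm]
    gcongr
    refine (tsum_splitting_le (monotone_coeffE hc.2.1) (coeffE_zero c) L).trans ?_
    gcongr <;> exact coeffE_le_ofReal c L
  rw [iSup_innerE_convE_one] at hfin
  refine lt_of_le_of_lt ?_ (ENNReal.mul_lt_top (ENNReal.ofReal_lt_top (r := C)) hfin)
  rw [splitMeasure_apply_eq_tsum_orbit MeasurableSet.univ,
    ← ENNReal.tsum_mul_left]
  refine ENNReal.tsum_le_tsum fun w => ?_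
  simp only [Set.indicator_univ, Pi.one_apply, mul_one]
  rw [loopWeight, loopWeight, wordWeight_eq_mul_of_pos ht ht', mul_assoc (ENNReal.ofReal _),
    mul_right_comm]
  exact mul_le_mul' (hlength w.length) le_rfl

lemma FstarVal_le_splitMeasure_univ {D : ℝ} (hR : ∀ y ∈ SigmaPlus τ, 0 ≤ R y)
    (hD : BoundedDistortion τ R D) (hx : x ∈ SigmaPlus τ) (hxA : x 0 = A) (haA : τ a A) :
    FstarVal (fun g i => g • i) τ R s A a x f c t ≤
      ENNReal.ofReal D * splitMeasure τ R s A a x X f c t Set.univ := by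
  rw [splitMeasure_apply MeasurableSet.univ, ← ENNReal.tsum_mul_left]
  refine (FstarVal_le_tsum s f c t).trans (ENNReal.tsum_le_tsum fun p => ?_)
  simp only [Set.indicator_univ, Pi.one_apply, mul_one, splitWeight, loopWeight]
  rw [mul_left_comm (ENNReal.ofReal D), ← mul_assoc (ENNReal.ofReal D)]
  exact mul_le_mul_right (mul_le_mul' (wordWeight_mul_le hR hD hx hxA haA t p.1 p.2) le_rfl) _

/-- The paper's weak* limit `μ_c[t]` of the approximating measures `μ_{c;N}[t]`. -/
noncomputable def muC (τ : W → W → Prop) (R : (ℕ → W) → ℝ) (s : W → G) (A a : W) (x : ℕ → W)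
    (X : ℤ → W) (f : I → ℝ≥0∞) (c : ℕ → ℝ) (t : ℝ) : Measure (ℤ → W) :=
  (FstarVal (fun g i => g • i) τ R s A a x f c t)⁻¹ • splitMeasure τ R s A a x X f c t

lemma muCN_apply (hc : ∀ n, 0 ≤ c n) (N : ℕ) {S : Set (ℤ → W)} (hS : MeasurableSet S) :
    muCN (fun g i => g • i) τ R s A a x X f c t N S =
      ∑' p, (wordPairsLe W N).indicator
        (fun p => (FstarVal (fun g i => g • i) τ R s A a x f c t)⁻¹ *
          (splitWeight τ R s A a x f c t p * S.indicator 1 (tsPoint X x p.1 p.2))) p := by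
  have hinj : Function.Injective fun p : List W × List W =>
      (p.2.length, p.1.length, p.2, p.1) := fun p q hpq => by
    simp only [Prod.mk.injEq] at hpq
    exact Prod.ext hpq.2.2.2 hpq.2.2.1
  simp_rw [muCN, Measure.sum_apply _ hS, Measure.smul_apply, Measure.dirac_apply' _ hS,
    smul_eq_mul]
  rw [← hinj.tsum_eq]
  · refine tsum_congr fun p => ?_
    simp_rw [← mul_assoc]
    exact (congrArg (· * _) (muCN_summand hc N p.1 p.2 _)).trans
      (Set.indicator_mul_left (i := p) _ _ fun p => S.indicator 1 (tsPoint X x p.1 p.2)).symm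
  · rintro ⟨n, m, v, u⟩ hq
    obtain ⟨-, -, -, -, B, b, -, hu, hv⟩ :=
      Set.mem_of_indicator_ne_zero (left_ne_zero_of_mul hq)
    exact ⟨(u, v), by simp only [hu.1, hv.1]⟩

lemma tendsto_muCN_apply (hc : ∀ n, 0 ≤ c n) {S : Set (ℤ → W)} (hS : MeasurableSet S) :
    Tendsto (fun N => muCN (fun g i => g • i) τ R s A a x X f c t N S) atTop
      (nhds (muC τ R s A a x X f c t S)) := by
  simp_rw [muCN_apply hc _ hS]
  rw [muC, Measure.smul_apply, splitMeasure_apply hS, smul_eq_mul, ← ENNReal.tsum_mul_left]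
  exact tendsto_tsum_indicator monotone_wordPairsLe iUnion_wordPairsLe _

end SplitMeasure

section Finiteness

variable [Group G] {I : Type*} [MulAction G I] {τ : W → W → Prop} {R : (ℕ → W) → ℝ} (s : W → G)
  {A a : W} {x : ℕ → W}

lemma wordWeight_le_pow {M : ℝ} (hR : ∀ y ∈ SigmaPlus τ, 0 ≤ R y)
    (hM : ∀ y ∈ SigmaPlus τ, R y ≤ M) (hx : x ∈ SigmaPlus τ) (haA : τ a (x 0)) (t : ℝ)
    (w : List W) :
    wordWeight τ R A a x t w ≤ ((ENNReal.ofReal t)⁻¹ * ENNReal.ofReal M) ^ w.length := by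
  by_cases hw : w ∈ wordsFromTo τ A a
  · rw [wordWeight_of_mem hw, mul_pow, ← ENNReal.ofReal_pow ((hR x hx).trans (hM x hx))]
    gcongr
    exact weight_le_pow hR hM _ (cat_mem_sigmaPlus_of_mem_wordsFromTo hx haA hw)
  · rw [wordWeight_of_notMem hw]
    exact zero_le

lemma exists_pos_iSup_innerE_convE_lt_top [Finite W] {f : I → ℝ≥0∞} (hf : MemL2 f)
    (hR : ∀ y ∈ SigmaPlus τ, 0 ≤ R y) (hRb : BddAbove (R '' SigmaPlus τ)) (hx : x ∈ SigmaPlus τ)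
    (haA : τ a (x 0)) :
    ∃ T : ℝ, 0 < T ∧
      ⨆ N, innerE (convE (fun g i => g • i) (phiLeC τ R s A a x (fun _ => 1) T N) f) f < ⊤ := by
  have := Fintype.ofFinite W
  obtain ⟨M, hM⟩ := hRb
  have hM (y) (hy : y ∈ SigmaPlus τ) : R y ≤ M := hM ⟨y, hy, rfl⟩
  have hM0 : 0 ≤ M := (hR x hx).trans (hM x hx)
  have hpos : 0 < 2 * (Fintype.card W * M + 1) := by positivity
  refine ⟨2 * (Fintype.card W * M + 1), hpos, ?_⟩
  rw [iSup_innerE_convE_one]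
  have hratio : (Fintype.card W : ℝ≥0∞) * ((ENNReal.ofReal (2 * (Fintype.card W * M + 1)))⁻¹ *
      ENNReal.ofReal M) ≤ 2⁻¹ := by
    rw [← ENNReal.ofReal_inv_of_pos hpos, ← ENNReal.ofReal_natCast,
      ← ENNReal.ofReal_mul (by positivity), ← ENNReal.ofReal_mul (by positivity),
      ← ENNReal.ofReal_ofNat 2, ← ENNReal.ofReal_inv_of_pos two_pos]
    refine ENNReal.ofReal_le_ofReal ?_
    rw [mul_left_comm, inv_mul_le_iff₀ hpos]
    linarith
  calc ∑' w, loopWeight τ R s A a x f (2 * (Fintype.card W * M + 1)) w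
      ≤ ∑' w : List W, ((ENNReal.ofReal (2 * (Fintype.card W * M + 1)))⁻¹ *
          ENNReal.ofReal M) ^ w.length * (2 * normSqE f) :=
        ENNReal.tsum_le_tsum fun w =>
          mul_le_mul' (wordWeight_le_pow hR hM hx haA _ w) (matrixCoeff_le f _)
    _ ≤ (∑' n : ℕ, 2⁻¹ ^ n) * (2 * normSqE f) := by
        rw [ENNReal.tsum_mul_right, tsum_pow_length]
        gcongr
    _ < ⊤ := ENNReal.mul_lt_top (by simp) (ENNReal.mul_lt_top (by simp) hf)

end Finiteness

section WeakLimits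

variable {α β : Type*} [MeasurableSpace α] {l : Filter β} {ν : β → Measure α} {μ : Measure α}

lemma tendsto_real_of_tendsto_integral [TopologicalSpace α]
    (hνμ : ∀ F : BoundedContinuousFunction α ℝ,
      Tendsto (fun k => ∫ z, F z ∂ν k) l (nhds (∫ z, F z ∂μ)))
    {S : Set α} (hS : MeasurableSet S) (hclopen : IsClopen S) :
    Tendsto (fun k => (ν k).real S) l (nhds (μ.real S)) := by
  have hintegral (m : Measure α) :
      ∫ z, BoundedContinuousFunction.indicator S hclopen z ∂m = m.real S :=
    integral_indicator_one hS
  simpa only [hintegral] using hνμ (BoundedContinuousFunction.indicator S hclopen)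

lemma isFiniteMeasure_of_tendsto_real [l.NeBot]
    (hlim : Tendsto (fun k => (ν k).real Set.univ) l (nhds (μ.real Set.univ)))
    {ε : ℝ} (hε : 0 < ε) (hν : ∀ᶠ k in l, ε ≤ (ν k).real Set.univ) : IsFiniteMeasure μ := by
  refine ⟨lt_top_iff_ne_top.2 fun htop => ?_⟩
  have hle := ge_of_tendsto hlim hν
  rw [Measure.real, htop, ENNReal.toReal_top] at hle
  exact hle.not_gt hε

lemma le_of_tendsto_of_forall_one_lt_le_mul_add [l.NeBot] {p q r : β → ℝ≥0∞} {P Q : ℝ}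
    (hp : Tendsto (fun k => (p k).toReal) l (nhds P))
    (hq : Tendsto (fun k => (q k).toReal) l (nhds Q)) (hr : Tendsto r l (nhds 0))
    (hqfin : ∀ᶠ k in l, q k ≠ ⊤)
    (hle : ∀ b : ℝ≥0, 1 < b → ∃ C : ℝ≥0, ∀ k, p k ≤ b * q k + C * r k) : P ≤ Q := by
  have hmul (b : ℝ≥0) (hb : 1 < b) : P ≤ b * Q := by
    obtain ⟨C, hC⟩ := hle b hb
    have hlim : Tendsto (fun k => b * (q k).toReal + C * (r k).toReal) l (nhds (b * Q)) := by
      simpa using (hq.const_mul (b : ℝ)).add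
        (((ENNReal.tendsto_toReal ENNReal.zero_ne_top).comp hr).const_mul (C : ℝ))
    refine le_of_tendsto_of_tendsto hp hlim ?_
    filter_upwards [hqfin, hr.eventually_lt_const ENNReal.zero_lt_top] with k hqk hrk
    have hbq := ENNReal.mul_ne_top (ENNReal.coe_ne_top (r := b)) hqk
    have hCr := ENNReal.mul_ne_top (ENNReal.coe_ne_top (r := C)) hrk.ne
    simpa [ENNReal.toReal_add hbq hCr] using
      ENNReal.toReal_mono (ENNReal.add_ne_top.2 ⟨hbq, hCr⟩) (hC k)
  have hlim : Tendsto (fun b : ℝ≥0 => b * Q) (nhdsWithin 1 (Set.Ioi 1)) (nhds Q) := by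
    simpa using ((by fun_prop : Continuous fun b : ℝ≥0 => b * Q).tendsto 1).mono_left
      nhdsWithin_le_nhds
  exact ge_of_tendsto hlim (eventually_nhdsWithin_of_forall hmul)

variable [TopologicalSpace α] {T : α → α}

lemma measurePreserving_of_real_preimage_eq [IsFiniteMeasure μ] (hT : Measurable T)
    (hgen : ‹MeasurableSpace α› =
      MeasurableSpace.generateFrom {S | MeasurableSet S ∧ IsClopen S})
    (hinv : ∀ S, MeasurableSet S → IsClopen S → μ.real (T ⁻¹' S) = μ.real S) :
    MeasurePreserving T μ μ := by
  refine ⟨hT, ext_of_generate_finite _ hgen ?_ ?_ ?_⟩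
  · exact fun S hS S' hS' _ => ⟨hS.1.inter hS'.1, hS.2.inter hS'.2⟩
  · rintro S ⟨hS, hclopen⟩
    rw [Measure.map_apply hT hS]
    exact (measureReal_eq_measureReal_iff).1 (hinv S hS hclopen)
  · rw [Measure.map_apply hT .univ, Set.preimage_univ]

lemma measurePreserving_of_tendsto_of_almost_invariant [l.NeBot] [IsFiniteMeasure μ]
    (hT : Measurable T) (hTc : Continuous T)
    (hgen : ‹MeasurableSpace α› =
      MeasurableSpace.generateFrom {S | MeasurableSet S ∧ IsClopen S})
    (hlim : ∀ S, MeasurableSet S → IsClopen S →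
      Tendsto (fun k => (ν k).real S) l (nhds (μ.real S)))
    (hfin : ∀ᶠ k in l, IsFiniteMeasure (ν k)) {r : β → ℝ≥0∞} (hr : Tendsto r l (nhds 0))
    (hle : ∀ b : ℝ≥0, 1 < b → ∃ C : ℝ≥0, ∀ k S, MeasurableSet S →
      ν k (T ⁻¹' S) ≤ b * ν k S + C * r k ∧ ν k S ≤ b * ν k (T ⁻¹' S) + C * r k) :
    MeasurePreserving T μ μ := by
  refine measurePreserving_of_real_preimage_eq hT hgen fun S hS hclopen => ?_
  have hlimS := hlim S hS hclopen
  have hlimT := hlim _ (hT hS) (hclopen.preimage hTc)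
  have hne (S' : Set α) : ∀ᶠ k in l, ν k S' ≠ ⊤ := hfin.mono fun k _ => measure_ne_top _ _
  apply le_antisymm
  · refine le_of_tendsto_of_forall_one_lt_le_mul_add hlimT hlimS hr (hne S) fun b hb => ?_
    exact (hle b hb).imp fun C hC k => (hC k S hS).1
  · refine le_of_tendsto_of_forall_one_lt_le_mul_add hlimS hlimT hr (hne _) fun b hb => ?_
    exact (hle b hb).imp fun C hC k => (hC k S hS).2

lemma measurableSpace_pi_eq_generateFrom_isClopen {κ W : Type*} [MeasurableSpace W]
    [TopologicalSpace W] [DiscreteTopology W] :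
    (MeasurableSpace.pi : MeasurableSpace (κ → W)) =
      MeasurableSpace.generateFrom {S | MeasurableSet S ∧ IsClopen S} := by
  refine le_antisymm ?_ (MeasurableSpace.generateFrom_le fun S hS => hS.1)
  refine iSup_le fun i => ?_
  rintro _ ⟨B, hB, rfl⟩
  exact MeasurableSpace.measurableSet_generateFrom
    ⟨measurable_pi_apply i hB, (isClopen_discrete B).preimage (continuous_apply i)⟩

end WeakLimits

section ShiftInvariance

lemma continuous_shiftZ [TopologicalSpace W] : Continuous (shiftZ : (ℤ → W) → ℤ → W) :=
  continuous_pi fun i => continuous_apply (i + 1)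

variable [MeasurableSpace W]

lemma measurable_shiftZ : Measurable (shiftZ : (ℤ → W) → ℤ → W) :=
  measurable_pi_lambda _ fun i => measurable_pi_apply (i + 1)

variable [Group G] {I : Type*} [MulAction G I] {τ : W → W → Prop} {R : (ℕ → W) → ℝ} {s : W → G}
  {A a : W} {x : ℕ → W} {X : ℤ → W} {f : I → ℝ≥0∞} {c : ℕ → ℝ}

lemma muC_le_mul_add {t : ℝ} {S S' : Set (ℤ → W)} {b C r : ℝ≥0∞}
    (h : splitMeasure τ R s A a x X f c t S ≤ b * splitMeasure τ R s A a x X f c t S' + C * r) :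
    muC τ R s A a x X f c t S ≤ b * muC τ R s A a x X f c t S' +
      C * (r / FstarVal (fun g i => g • i) τ R s A a x f c t) := by
  simp only [muC, Measure.smul_apply, smul_eq_mul, div_eq_mul_inv]
  refine (mul_le_mul_right h _).trans_eq ?_
  ring

lemma exists_muC_almost_invariant (τ : W → W → Prop) (R : (ℕ → W) → ℝ) (s : W → G) (A a : W)
    (x : ℕ → W) (X : ℤ → W) (f : I → ℝ≥0∞) (hc : SlowlyIncreasing c) {b : ℝ≥0} (hb : 1 < b) :
    ∃ C : ℝ≥0, ∀ t S, MeasurableSet S →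
      let r := (⨆ N, innerE (convE (fun g i => g • i) (phiLeC τ R s A a x c t N) f) f) /
        FstarVal (fun g i => g • i) τ R s A a x f c t
      muC τ R s A a x X f c t (shiftZ ⁻¹' S) ≤ b * muC τ R s A a x X f c t S + C * r ∧
        muC τ R s A a x X f c t S ≤ b * muC τ R s A a x X f c t (shiftZ ⁻¹' S) + C * r := by
  obtain ⟨K, hK⟩ := hc.exists_coeffE_succ_le hb
  refine ⟨K * (coeffE c K).toNNReal, fun t S hS => ?_⟩
  have hS' := measurable_shiftZ hS
  rw [ENNReal.coe_mul, ENNReal.coe_natCast, ENNReal.coe_toNNReal (coeffE_ne_top c K)]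
  exact ⟨muC_le_mul_add (splitMeasure_preimage_shiftZ_le hc.2.1 hK hS hS'),
    muC_le_mul_add (splitMeasure_le_preimage_shiftZ hc.2.1 hK hS hS')⟩

lemma splitMeasure_univ_lt_top_of_gamma_lt (hc : SlowlyIncreasing c)
    (hγ : ∃ T : ℝ, 0 < T ∧
      ⨆ N, innerE (convE (fun g i => g • i) (phiLeC τ R s A a x (fun _ => 1) T N) f) f < ⊤)
    {t : ℝ} (ht : gammaInnerC' (fun g i => g • i) τ R s A a x f < t) :
    splitMeasure τ R s A a x X f c t Set.univ < ⊤ :=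
  let ⟨_, ⟨ht', hfin⟩, htt'⟩ := exists_lt_of_csInf_lt hγ ht
  splitMeasure_univ_lt_top hc ht' htt' hfin

lemma isFiniteMeasure_muC {t : ℝ} (hF : FstarVal (fun g i => g • i) τ R s A a x f c t ≠ 0)
    (hfin : splitMeasure τ R s A a x X f c t Set.univ < ⊤) :
    IsFiniteMeasure (muC τ R s A a x X f c t) :=
  ⟨ENNReal.mul_lt_top (ENNReal.inv_lt_top.2 hF.bot_lt) hfin⟩

lemma pos_and_inv_le_muC_real_univ {D t : ℝ} (hR : ∀ y ∈ SigmaPlus τ, 0 ≤ R y)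
    (hD : BoundedDistortion τ R D) (hx : x ∈ SigmaPlus τ) (hxA : x 0 = A) (haA : τ a A)
    (hF : FstarVal (fun g i => g • i) τ R s A a x f c t ≠ 0)
    (hfin : splitMeasure τ R s A a x X f c t Set.univ < ⊤) :
    0 < D ∧ D⁻¹ ≤ (muC τ R s A a x X f c t).real Set.univ := by
  have := isFiniteMeasure_muC hF hfin
  have hle := FstarVal_le_splitMeasure_univ (s := s) (X := X) (f := f) (c := c) (t := t)
    hR hD hx hxA haA
  have hFtop : FstarVal (fun g i => g • i) τ R s A a x f c t ≠ ⊤ :=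
    (hle.trans_lt (ENNReal.mul_lt_top ENNReal.ofReal_lt_top hfin)).ne
  have hone : 1 ≤ ENNReal.ofReal D * muC τ R s A a x X f c t Set.univ := by
    rw [muC, Measure.smul_apply, smul_eq_mul, mul_left_comm,
      ← ENNReal.inv_mul_cancel hF hFtop]
    gcongr
  have hDpos : 0 < D := by
    by_contra hD0
    simp [ENNReal.ofReal_of_nonpos (not_lt.1 hD0)] at hone
  refine ⟨hDpos, (inv_le_iff_one_le_mul₀' hDpos).2 ?_⟩
  rwa [← ofReal_measureReal, ← ENNReal.ofReal_mul hDpos.le, ENNReal.one_le_ofReal] at hone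

lemma real_eq_muC_real_of_tendsto [TopologicalSpace W] [DiscreteTopology W]
    (hc : ∀ n, 0 ≤ c n) {t : ℝ} [IsFiniteMeasure (muC τ R s A a x X f c t)]
    {ν : Measure (ℤ → W)}
    (hν : ∀ F : BoundedContinuousFunction (ℤ → W) ℝ,
      Tendsto (fun N => ∫ z, F z ∂(muCN (fun g i => g • i) τ R s A a x X f c t N)) atTop
        (nhds (∫ z, F z ∂ν)))
    {S : Set (ℤ → W)} (hS : MeasurableSet S) (hclopen : IsClopen S) :
    ν.real S = (muC τ R s A a x X f c t).real S :=
  tendsto_nhds_unique (tendsto_real_of_tendsto_integral hν hS hclopen)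
    ((ENNReal.tendsto_toReal (measure_ne_top _ S)).comp (tendsto_muCN_apply hc hS))

theorem statement16_general [TopologicalSpace W] [DiscreteTopology W] {D : ℝ}
    (hR : ∀ y ∈ SigmaPlus τ, 0 ≤ R y) (hD : BoundedDistortion τ R D)
    (hx : x ∈ SigmaPlus τ) (hxA : x 0 = A) (haA : τ a A) (hc : SlowlyIncreasing c)
    (hγ : ∃ T : ℝ, 0 < T ∧
      ⨆ N, innerE (convE (fun g i => g • i) (phiLeC τ R s A a x (fun _ => 1) T N) f) f < ⊤)
    {γf : ℝ} (hγf : γf = gammaInnerC' (fun g i => g • i) τ R s A a x f)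
    (hFinf : Tendsto (fun t => FstarVal (fun g i => g • i) τ R s A a x f c t)
      (nhdsWithin γf (Set.Ioi γf)) (nhds ⊤))
    (hRatio : Tendsto (fun t =>
        (⨆ N, innerE (convE (fun g i => g • i) (phiLeC τ R s A a x c t N) f) f) /
          FstarVal (fun g i => g • i) τ R s A a x f c t)
      (nhdsWithin γf (Set.Ioi γf)) (nhds 0))
    {μlim : ℝ → Measure (ℤ → W)}
    (hμlim : ∀ t : ℝ, γf < t → ∀ F : BoundedContinuousFunction (ℤ → W) ℝ,
      Tendsto (fun N => ∫ z, F z ∂(muCN (fun g i => g • i) τ R s A a x X f c t N)) atTop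
        (nhds (∫ z, F z ∂(μlim t))))
    {t : ℕ → ℝ} (htk : ∀ k, γf < t k) (htlim : Tendsto t atTop (nhds γf)) {μ : Measure (ℤ → W)}
    (hacc : ∀ F : BoundedContinuousFunction (ℤ → W) ℝ,
      Tendsto (fun k => ∫ z, F z ∂(μlim (t k))) atTop (nhds (∫ z, F z ∂μ))) :
    MeasurePreserving shiftZ μ μ := by
  have ht : Tendsto t atTop (nhdsWithin γf (Set.Ioi γf)) :=
    tendsto_nhdsWithin_iff.2 ⟨htlim, .of_forall htk⟩
  have hF : ∀ᶠ k in atTop, FstarVal (fun g i => g • i) τ R s A a x f c (t k) ≠ 0 :=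
    (hFinf.comp ht).eventually_ne ENNReal.top_ne_zero
  have hfin (k) : splitMeasure τ R s A a x X f c (t k) Set.univ < ⊤ :=
    splitMeasure_univ_lt_top_of_gamma_lt hc hγ (hγf ▸ htk k)
  have hmuCfin : ∀ᶠ k in atTop, IsFiniteMeasure (muC τ R s A a x X f c (t k)) :=
    hF.mono fun k hFk => isFiniteMeasure_muC hFk (hfin k)
  have hlim (S : Set (ℤ → W)) (hS : MeasurableSet S) (hclopen : IsClopen S) :
      Tendsto (fun k => (muC τ R s A a x X f c (t k)).real S) atTop (nhds (μ.real S)) := by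
    refine (tendsto_real_of_tendsto_integral hacc hS hclopen).congr' (hmuCfin.mono fun k _ => ?_)
    exact real_eq_muC_real_of_tendsto (fun n => (hc.1 n).le) (hμlim _ (htk k)) hS hclopen
  have hmass := hF.mono fun k hFk => pos_and_inv_le_muC_real_univ hR hD hx hxA haA hFk (hfin k)
  obtain ⟨k₀, hDpos, -⟩ := hmass.exists
  have := isFiniteMeasure_of_tendsto_real (hlim _ .univ isClopen_univ) (inv_pos.2 hDpos)
    (hmass.mono fun k hk => hk.2)
  refine measurePreserving_of_tendsto_of_almost_invariant measurable_shiftZ continuous_shiftZ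
    measurableSpace_pi_eq_generateFrom_isClopen hlim hmuCfin (hRatio.comp ht) fun b hb => ?_
  obtain ⟨C, hC⟩ := exists_muC_almost_invariant τ R s A a x X f hc hb
  exact ⟨C, fun k => hC (t k)⟩

end ShiftInvariance

/-- (Theorem `theorem:shiftinv`.) Any weak* accumulation point,
along `t_k ↓ γ(f)`, of the weak* limits `μ_c[t]` of the approximating measures
`μ_{c;N}[t]` is shift invariant. -/
theorem statement16 {W G J : Type*} [Fintype W] [MeasurableSpace W]
    [TopologicalSpace W] [DiscreteTopology W]
    [Countable G] [Group G] [Countable J]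
    (τ : W → W → Prop) (R : (ℕ → W) → ℝ) (s : W → G)
    (Hfam : J → Subgroup G)
    (hmix : Mixing τ)
    (hRpos : ∀ x ∈ SigmaPlus τ, 0 < R x)
    (hHolder : ∃ C₀ θ : ℝ, LocallyHolder τ R C₀ θ)
    (hP0 : ∀ B : W, growthRate (Zper τ R B) = 1)
    (htrans : ExtTransitive τ s)
    (A a : W) (x : ℕ → W) (X : ℤ → W)
    (hx : x ∈ SigmaPlus τ) (hxA : x 0 = A) (hxAu : ∀ i : ℕ, 0 < i → x i ≠ A)
    (hXadm : ∀ i : ℤ, i < -1 → τ (X i) (X (i + 1))) (hXa : X (-1) = a)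
    (hXau : ∀ i : ℤ, i < -1 → X i ≠ a)
    (haA : τ a A)
    (f : (Σ j, G ⧸ Hfam j) → ℝ≥0∞) (hf : MemL2 f)
    (c : ℕ → ℝ) (hc : SlowlyIncreasing c)
    (γf : ℝ) (hγf : γf = gammaInnerC' (rhoIdx Hfam) τ R s A a x f)
    (hFinf : Tendsto (fun t => FstarVal (rhoIdx Hfam) τ R s A a x f c t)
      (nhdsWithin γf (Set.Ioi γf)) (nhds ⊤))
    (hRatio : Tendsto (fun t =>
        (⨆ N, innerE (convE (rhoIdx Hfam) (phiLeC τ R s A a x c t N) f) f) /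
          FstarVal (rhoIdx Hfam) τ R s A a x f c t)
      (nhdsWithin γf (Set.Ioi γf)) (nhds 0))
    (μlim : ℝ → Measure (ℤ → W))
    (hμlim : ∀ t : ℝ, γf < t → ∀ F : BoundedContinuousFunction (ℤ → W) ℝ,
      Tendsto (fun N => ∫ z, F z ∂ (muCN (rhoIdx Hfam) τ R s A a x X f c t N))
        atTop (nhds (∫ z, F z ∂ (μlim t))))
    (t : ℕ → ℝ) (htk : ∀ k, γf < t k) (htlim : Tendsto t atTop (nhds γf))
    (μ : Measure (ℤ → W))
    (hacc : ∀ F : BoundedContinuousFunction (ℤ → W) ℝ,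
      Tendsto (fun k => ∫ z, F z ∂ (μlim (t k))) atTop (nhds (∫ z, F z ∂ μ))) :
    ∀ u : Set (ℤ → W), MeasurableSet u → μ (shiftZ ⁻¹' u) = μ u := by
  obtain ⟨C₀, θ, hH⟩ := hHolder
  have hR (y) (hy : y ∈ SigmaPlus τ) : 0 ≤ R y := (hRpos y hy).le
  have hγ := exists_pos_iSup_innerE_convE_lt_top (A := A) s hf hR (hH.bddAbove_image hRpos)
    hx (hxA ▸ haA)
  have hinv := statement16_general hR (hH.boundedDistortion hRpos) hx hxA haA hc hγ hγf hFinf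
    hRatio hμlim htk htlim hacc
  exact fun u hu => hinv.measure_preimage hu.nullMeasurableSet

end CMS
end

section
/- Let F₂ be the free group on two generators a,b with S={a,a⁻¹,b,b⁻¹}, and let Σ⁺={x∈S^ℕ : x_{i+1}≠x_i⁻¹ for all i} be the space of infinite reduced words. Let ν be a Borel probability measure on Σ⁺ satisfying ν([u]) = (1/4)·3^{−(m−1)} for every reduced word u of length m≥1, where [u]={x∈Σ⁺ : x_{i−1}=u_i for 1≤i≤m}. For g∈F₂ and x∈Σ⁺, let g⁻¹∧x denote the length of the longest common prefix of the reduced word of g⁻¹ and x, and set q(g,x)=|g|−2(g⁻¹∧x), where |g| is the reduced word length. Then for every g∈F₂, ∫_{Σ⁺} 3^{−q(g,x)/2} dν(x) = (1 + |g|/2)·3^{−|g|/2}. -/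
/-!
Since `3 ^ k = 1 + ∑ j < k, 2 * 3 ^ j`, and `j < w ∧ x` holds exactly when `x` lies in the cylinder
of the prefix of `w` of length `j + 1`, the integral of `3 ^ (w ∧ x)` is `1` plus the sum over the
nonempty prefixes of `w` of `2 * 3 ^ j * ν [w₁ ⋯ w_{j+1}]`. For the uniform measure each such term
is `1 / 2`, giving `1 + |w| / 2`; the integrand of the theorem is `3 ^ (-|g| / 2) * 3 ^ (g⁻¹ ∧ x)`.
-/

open scoped ENNReal NNReal BigOperators
open Filter MeasureTheory

namespace CMS

variable {W : Type*} {G : Type*}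

/-- The formal inverse of a letter of the free group alphabet. -/
def invLetter (p : Fin 2 × Bool) : Fin 2 × Bool := (p.1, !p.2)

/-- The space `Σ⁺` of infinite reduced words over `{a,a⁻¹,b,b⁻¹}`. -/
def RedWords : Set (ℕ → Fin 2 × Bool) :=
  {x | ∀ i, x (i + 1) ≠ invLetter (x i)}

/-- Cylinder `[u]` in the space of infinite reduced words. -/
def cylRed (u : List (Fin 2 × Bool)) : Set {x : ℕ → Fin 2 × Bool // x ∈ RedWords} :=
  {x | ∀ i : Fin u.length, x.1 i = u.get i}

/-- A finite word is reduced. -/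
def IsReduced (u : List (Fin 2 × Bool)) : Prop :=
  u.Chain' fun p q => q ≠ invLetter p

/-- `g⁻¹ ∧ x`: the length of the longest common prefix of the reduced word of `g⁻¹`
and `x`. -/
noncomputable def prefixLen (w : List (Fin 2 × Bool)) (x : ℕ → Fin 2 × Bool) : ℕ :=
  sSup {k | w.take k = (List.range k).map x}

section PrefixLen

theorem take_eq_map_range_of_le {α : Type*} {w : List α} {x : ℕ → α} {j k : ℕ} (hjk : j ≤ k)
    (h : w.take k = (List.range k).map x) : w.take j = (List.range j).map x := by
  simpa only [List.take_take, ← List.map_take, List.take_range, min_eq_left hjk]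
    using congrArg (List.take j) h

theorem le_length_of_take_eq_map_range {α : Type*} {w : List α} {x : ℕ → α} {k : ℕ}
    (h : w.take k = (List.range k).map x) : k ≤ w.length := by
  simpa using congrArg List.length h

variable (w : List (Fin 2 × Bool))

theorem le_prefixLen_iff (x : ℕ → Fin 2 × Bool) (j : ℕ) :
    j ≤ prefixLen w x ↔ w.take j = (List.range j).map x := by
  have bdd : BddAbove {k | w.take k = (List.range k).map x} :=
    ⟨w.length, fun _ => le_length_of_take_eq_map_range⟩
  have attained : w.take (prefixLen w x) = (List.range (prefixLen w x)).map x :=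
    Nat.sSup_mem ⟨0, by simp⟩ bdd
  exact ⟨fun h => take_eq_map_range_of_le h attained, fun h => le_csSup bdd h⟩

theorem prefixLen_le_length (x : ℕ → Fin 2 × Bool) : prefixLen w x ≤ w.length :=
  le_length_of_take_eq_map_range ((le_prefixLen_iff w x _).1 le_rfl)

end PrefixLen

theorem mem_cylRed_iff (u : List (Fin 2 × Bool)) (x : {x : ℕ → Fin 2 × Bool // x ∈ RedWords}) :
    x ∈ cylRed u ↔ u = (List.range u.length).map x.1 := by
  simp [cylRed, List.ext_get_iff, Fin.forall_iff, eq_comm]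

theorem mem_cylRed_take_iff (w : List (Fin 2 × Bool))
    (x : {x : ℕ → Fin 2 × Bool // x ∈ RedWords}) {j : ℕ} (hj : j ≤ w.length) :
    x ∈ cylRed (w.take j) ↔ j ≤ prefixLen w x.1 := by
  rw [mem_cylRed_iff, le_prefixLen_iff, List.length_take_of_le hj]

theorem measurableSet_cylRed (u : List (Fin 2 × Bool)) : MeasurableSet (cylRed u) := by
  simp only [cylRed, Set.ofPred_forall]
  exact MeasurableSet.iInter fun i =>
    (measurable_pi_apply (i : ℕ)).comp measurable_subtype_coe (measurableSet_singleton _)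

theorem add_one_pow_prefixLen (c : ℝ≥0∞) (w : List (Fin 2 × Bool))
    (x : {x : ℕ → Fin 2 × Bool // x ∈ RedWords}) :
    (c + 1) ^ prefixLen w x.1 = ∑ j ∈ Finset.range w.length,
      (cylRed (w.take (j + 1))).indicator (fun _ => (c + 1) ^ j * c) x + 1 := by
  rw [← geom_sum_mul_add c, Finset.sum_mul,
    ← Finset.sum_subset (Finset.range_mono (prefixLen_le_length w x.1))]
  · congr 1
    refine Finset.sum_congr rfl fun j hj => ?_
    have hj : j + 1 ≤ prefixLen w x.1 := Finset.mem_range.1 hj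
    rw [Set.indicator_of_mem
      ((mem_cylRed_take_iff w x (hj.trans (prefixLen_le_length w x.1))).2 hj)]
  · intro j hjw hj
    have hjw : j + 1 ≤ w.length := Finset.mem_range.1 hjw
    have hj : ¬ j + 1 ≤ prefixLen w x.1 := fun h => hj (Finset.mem_range.2 h)
    exact Set.indicator_of_notMem (mt (mem_cylRed_take_iff w x hjw).1 hj) _

theorem lintegral_add_one_pow_prefixLen (ν : Measure {x : ℕ → Fin 2 × Bool // x ∈ RedWords})
    (c : ℝ≥0∞) (w : List (Fin 2 × Bool)) :
    ∫⁻ x, (c + 1) ^ prefixLen w x.1 ∂ν =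
      ∑ j ∈ Finset.range w.length, (c + 1) ^ j * c * ν (cylRed (w.take (j + 1))) +
        ν Set.univ := by
  simp_rw [add_one_pow_prefixLen]
  rw [lintegral_add_right _ measurable_const, lintegral_one, lintegral_finsetSum _ fun j _ =>
    measurable_const.indicator (measurableSet_cylRed _)]
  simp_rw [lintegral_indicator_const (measurableSet_cylRed _)]

theorem isReduced_iff_freeGroup_isReduced (u : List (Fin 2 × Bool)) :
    IsReduced u ↔ FreeGroup.IsReduced u := by
  have ne_invLetter_iff (p q : Fin 2 × Bool) : q ≠ invLetter p ↔ (p.1 = q.1 → p.2 = q.2) := by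
    simp only [invLetter, ne_eq, Prod.ext_iff, not_and, Bool.not_eq_not, eq_comm]
  simp only [IsReduced, ne_invLetter_iff]
  exact Iff.rfl

theorem lintegral_three_pow_prefixLen
    (ν : Measure {x : ℕ → Fin 2 × Bool // x ∈ RedWords}) [IsProbabilityMeasure ν]
    (hcyl : ∀ u : List (Fin 2 × Bool), u ≠ [] → IsReduced u →
      ν (cylRed u) = ENNReal.ofReal ((1 / 4 : ℝ) * ((3 : ℝ)⁻¹) ^ (u.length - 1)))
    {w : List (Fin 2 × Bool)} (hw : IsReduced w) :
    ∫⁻ x, 3 ^ prefixLen w x.1 ∂ν = ENNReal.ofReal (1 + (w.length : ℝ) / 2) := by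
  have term_eq_half : ∀ j ∈ Finset.range w.length,
      3 ^ j * 2 * ν (cylRed (w.take (j + 1))) = ENNReal.ofReal (1 / 2) := by
    intro j hj
    have hlen : (w.take (j + 1)).length = j + 1 :=
      List.length_take_of_le (Finset.mem_range.1 hj)
    have weight_eq : (3 ^ j * 2 : ℝ≥0∞) = ENNReal.ofReal (3 ^ j * 2) := by
      simp [ENNReal.ofReal_mul, ENNReal.ofReal_pow]
    rw [hcyl _ (List.ne_nil_of_length_eq_add_one hlen) (List.IsChain.take hw _), hlen,
      Nat.add_sub_cancel, weight_eq, ← ENNReal.ofReal_mul (by positivity)]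
    congr 1
    rw [inv_pow]
    field_simp
    norm_num
  calc ∫⁻ x, 3 ^ prefixLen w x.1 ∂ν
      = ∑ j ∈ Finset.range w.length, 3 ^ j * 2 * ν (cylRed (w.take (j + 1))) + 1 := by
        simpa only [two_add_one_eq_three, measure_univ]
          using lintegral_add_one_pow_prefixLen ν 2 w
    _ = w.length * ENNReal.ofReal (1 / 2) + 1 := by
        rw [Finset.sum_congr rfl term_eq_half, Finset.sum_const, Finset.card_range, nsmul_eq_mul]
    _ = ENNReal.ofReal (1 + (w.length : ℝ) / 2) := by
        rw [← ENNReal.ofReal_natCast, ← ENNReal.ofReal_mul (by positivity), ← ENNReal.ofReal_one,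
          ← ENNReal.ofReal_add (by positivity) zero_le_one]
        ring_nf

theorem ofReal_rpow_neg_sub_two_mul_div_two {b : ℝ} (hb : 0 < b) (t : ℝ) (k : ℕ) :
    ENNReal.ofReal (b ^ (-((t - 2 * (k : ℝ)) / 2))) =
      ENNReal.ofReal (b ^ (-(t / 2))) * ENNReal.ofReal b ^ k := by
  rw [← ENNReal.ofReal_pow hb.le, ← ENNReal.ofReal_mul (by positivity), ← Real.rpow_natCast,
    ← Real.rpow_add hb]
  ring_nf

/-- (Boundary spherical function computation for the free group.)
If `ν` is the Borel probability on the space of infinite reduced words with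
`ν([u]) = (1/4)·3^{-(m-1)}` for every reduced word `u` of length `m ≥ 1`, then for
every `g ∈ F₂`, with `q(g,x) = |g| - 2(g⁻¹ ∧ x)`,
`∫ 3^{-q(g,x)/2} dν(x) = (1 + |g|/2)·3^{-|g|/2}`. -/
theorem statement19
    (ν : Measure {x : ℕ → Fin 2 × Bool // x ∈ RedWords})
    (hprob : IsProbabilityMeasure ν)
    (hcyl : ∀ u : List (Fin 2 × Bool), u ≠ [] → IsReduced u →
      ν (cylRed u) = ENNReal.ofReal ((1 / 4 : ℝ) * ((3 : ℝ)⁻¹) ^ (u.length - 1))) :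
    ∀ g : FreeGroup (Fin 2),
      (∫⁻ x, ENNReal.ofReal
          ((3 : ℝ) ^ (-((((FreeGroup.toWord g).length : ℝ) -
              2 * (prefixLen (FreeGroup.toWord g⁻¹) x.1 : ℝ)) / 2))) ∂ν)
        = ENNReal.ofReal
            ((1 + ((FreeGroup.toWord g).length : ℝ) / 2) *
              (3 : ℝ) ^ (-(((FreeGroup.toWord g).length : ℝ) / 2))) := by
  intro g
  have hlen : (FreeGroup.toWord g⁻¹).length = (FreeGroup.toWord g).length := by
    rw [FreeGroup.toWord_inv, FreeGroup.invRev_length]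
  have hred : IsReduced (FreeGroup.toWord g⁻¹) :=
    (isReduced_iff_freeGroup_isReduced _).2 FreeGroup.isReduced_toWord
  simp_rw [ofReal_rpow_neg_sub_two_mul_div_two three_pos, ENNReal.ofReal_ofNat]
  rw [lintegral_const_mul' _ _ ENNReal.ofReal_ne_top, lintegral_three_pow_prefixLen ν hcyl hred,
    hlen, ← ENNReal.ofReal_mul (by positivity), mul_comm]

end CMS
end
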